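/- arXiv:2002.09879 — 3 statements merged into one kernel-verified Lean document; each statement's English description precedes it below -/
import Mathlib

section
/- Let $K(x) = \frac{x^\perp}{2\pi|x|^2}$ be the Biot-Savart kernel on $\mathbb{R}^2$ and $K_\alpha = K * G_\alpha$, where $G_\alpha$ is the fundamental solution of $I - \alpha\Delta$. Then there exists a universal constant $C$ such that $|K_\alpha(x) - K(x)| \leq C\sqrt{\alpha}/|x|^2$ for all $x \neq 0$ and all $\alpha > 0$. -/
open MeasureTheory Real

/-- The Bessel-type fundamental solution of `I - αΔ` on `ℝ²`. -/
noncomputable def besselG (α : ℝ) (x : ℝ × ℝ) : ℝ :=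
  (1 / (4 * π * α)) * ∫ t in Set.Ioi (0 : ℝ),
    (1 / t) * Real.exp (-(π * (x.1 ^ 2 + x.2 ^ 2)) / (t * α)) * Real.exp (-t / (4 * π))

/-- The Biot-Savart kernel `K(x) = x^⊥ / (2π|x|²)`. -/
noncomputable def BSK (x : ℝ × ℝ) : ℝ × ℝ :=
  (-x.2 / (2 * π * (x.1 ^ 2 + x.2 ^ 2)), x.1 / (2 * π * (x.1 ^ 2 + x.2 ^ 2)))

/-- The smoothed kernel `K_α = K * G_α`. -/
noncomputable def BSKα (α : ℝ) (x : ℝ × ℝ) : ℝ × ℝ :=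
  (∫ y : ℝ × ℝ, (BSK (x.1 - y.1, x.2 - y.2)).1 * besselG α y,
   ∫ y : ℝ × ℝ, (BSK (x.1 - y.1, x.2 - y.2)).2 * besselG α y)

/-!
On `ℝ² = ℂ`, the Biot-Savart kernel is the complex conjugate of `1 / (2πiz)`. Since `G_α` has
mass one, `K_α - K` at `z` is, up to conjugation, the average of `((z - w)⁻¹ - z⁻¹) / (2πi)`
against `G_α(w) dw`. The identity `(z - w)⁻¹ - z⁻¹ = w / (z (z - w))` and `|z| ≤ |z - w| + |w|`
give the pointwise bound `|z|² |(z - w)⁻¹ - z⁻¹| ≤ |w| + |w|² / |z - w|`. The first term averages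
to the first moment of `G_α`, of order `√α`. For the second, `|w|² G_α(w)` is bounded by `1 / π`
and has integral `4α`: the singularity `|z - w|⁻¹` costs `O(r)` inside the disc of radius `r`
about `z` and `O(α / r)` outside of it, and `r = √α` balances the two.
-/

lemma sq_norm_mul_norm_inv_sub_sub_inv_le {𝕜 : Type*} [NormedDivisionRing 𝕜] (z w : 𝕜) :
    ‖z‖ ^ 2 * ‖(z - w)⁻¹ - z⁻¹‖ ≤ ‖w‖ + ‖w‖ ^ 2 / ‖z - w‖ := by
  rcases eq_or_ne z 0 with rfl | hz
  · simp only [norm_zero, ne_eq, OfNat.ofNat_ne_zero, not_false_eq_true, zero_pow, zero_mul]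
    positivity
  rcases eq_or_ne z w with rfl | hzw
  · simp [field]
  have hsub : z - w ≠ 0 := sub_ne_zero.2 hzw
  calc ‖z‖ ^ 2 * ‖(z - w)⁻¹ - z⁻¹‖ = ‖w‖ * ‖z‖ / ‖z - w‖ := by
        rw [inv_sub_inv' hsub hz, sub_sub_cancel, norm_mul, norm_mul, norm_inv, norm_inv]
        field_simp [norm_ne_zero_iff.2 hz]
    _ ≤ ‖w‖ * (‖z - w‖ + ‖w‖) / ‖z - w‖ := by
        gcongr
        exact norm_le_norm_sub_add z w
    _ = ‖w‖ + ‖w‖ ^ 2 / ‖z - w‖ := by field_simp [norm_ne_zero_iff.2 hsub]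

section RieszPotential

variable {E : Type*} [SeminormedAddCommGroup E] {h : E → ℝ} {B r : ℝ}

lemma div_norm_le_add_indicator_ball (hr : 0 < r) {a : ℝ} (ha : 0 ≤ a) (haB : a ≤ B) (v : E) :
    a / ‖v‖ ≤ r⁻¹ * a + B * (Metric.ball 0 r).indicator (fun u : E ↦ ‖u‖⁻¹) v := by
  by_cases hv : v ∈ Metric.ball 0 r
  · rw [Set.indicator_of_mem hv, div_eq_mul_inv]
    have : a * ‖v‖⁻¹ ≤ B * ‖v‖⁻¹ := by gcongr
    have : 0 ≤ r⁻¹ * a := by positivity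
    linarith
  · have hrv : r ≤ ‖v‖ := by simpa using hv
    rw [Set.indicator_of_notMem hv, mul_zero, add_zero, div_eq_inv_mul]
    gcongr

variable [MeasurableSpace E] [BorelSpace E]
  {μ : Measure E} [μ.IsAddLeftInvariant] [μ.IsNegInvariant]

lemma integrable_add_indicator_ball_comp_sub_left (hh : Integrable h μ)
    (hball : IntegrableOn (fun u : E ↦ ‖u‖⁻¹) (Metric.ball 0 r) μ) (z : E) :
    Integrable (fun w ↦ r⁻¹ * h w +
      B * (Metric.ball 0 r).indicator (fun u : E ↦ ‖u‖⁻¹) (z - w)) μ :=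
  (hh.const_mul _).add
    (((hball.integrable_indicator measurableSet_ball).comp_sub_left z).const_mul _)

variable [SecondCountableTopology E]

lemma integrable_div_norm_sub (hr : 0 < r) (hh : Integrable h μ) (h_nonneg : ∀ w, 0 ≤ h w)
    (h_le : ∀ w, h w ≤ B) (hball : IntegrableOn (fun u : E ↦ ‖u‖⁻¹) (Metric.ball 0 r) μ) (z : E) :
    Integrable (fun w ↦ h w / ‖z - w‖) μ := by
  refine (integrable_add_indicator_ball_comp_sub_left (B := B) hh hball z).mono'
    (hh.aestronglyMeasurable.div₀ (by fun_prop)) (.of_forall fun w ↦ ?_)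
  rw [norm_of_nonneg (div_nonneg (h_nonneg w) (norm_nonneg _))]
  exact div_norm_le_add_indicator_ball hr (h_nonneg w) (h_le w) _

lemma integral_div_norm_sub_le (hr : 0 < r) (hh : Integrable h μ) (h_nonneg : ∀ w, 0 ≤ h w)
    (h_le : ∀ w, h w ≤ B) (hball : IntegrableOn (fun u : E ↦ ‖u‖⁻¹) (Metric.ball 0 r) μ) (z : E) :
    ∫ w, h w / ‖z - w‖ ∂μ ≤ r⁻¹ * ∫ w, h w ∂μ + B * ∫ u in Metric.ball 0 r, ‖u‖⁻¹ ∂μ := by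
  have hind := hball.integrable_indicator measurableSet_ball
  calc ∫ w, h w / ‖z - w‖ ∂μ
      ≤ ∫ w, r⁻¹ * h w + B * (Metric.ball 0 r).indicator (fun u : E ↦ ‖u‖⁻¹) (z - w) ∂μ :=
        integral_mono (integrable_div_norm_sub hr hh h_nonneg h_le hball z)
          (integrable_add_indicator_ball_comp_sub_left hh hball z)
          fun w ↦ div_norm_le_add_indicator_ball hr (h_nonneg w) (h_le w) _
    _ = r⁻¹ * ∫ w, h w ∂μ + B * ∫ u in Metric.ball 0 r, ‖u‖⁻¹ ∂μ := by
        rw [integral_add (hh.const_mul _) ((hind.comp_sub_left z).const_mul _),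
          integral_const_mul, integral_const_mul, integral_sub_left_eq_self _ μ z,
          integral_indicator measurableSet_ball]

end RieszPotential

section BallInv

open Module Set

lemma indicator_ball_inv_norm {E : Type*} [SeminormedAddCommGroup E] (r : ℝ) :
    (Metric.ball (0 : E) r).indicator (fun u ↦ ‖u‖⁻¹) = fun u ↦ (Iio r).indicator (·⁻¹) ‖u‖ := by
  ext u
  by_cases hu : ‖u‖ < r <;> simp [hu]

variable {E : Type*} [NormedAddCommGroup E] [NormedSpace ℝ E] [FiniteDimensional ℝ E]
  [MeasurableSpace E] [BorelSpace E] (μ : Measure E) [μ.IsAddHaarMeasure] {r : ℝ}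

lemma pow_smul_indicator_Iio_inv {n : ℕ} (hn : 2 ≤ n) (r : ℝ) :
    EqOn (fun y : ℝ ↦ y ^ (n - 1) • (Iio r).indicator (·⁻¹) y)
      ((Iio r).indicator fun y ↦ y ^ (n - 2)) (Ioi 0) := by
  intro y (hy : 0 < y)
  obtain ⟨k, rfl⟩ := Nat.exists_eq_add_of_le' hn
  by_cases hyr : y < r <;> simp [hyr, pow_succ, hy.ne']

lemma integrableOn_ball_inv_norm (hE : 2 ≤ finrank ℝ E) (r : ℝ) :
    IntegrableOn (fun u : E ↦ ‖u‖⁻¹) (Metric.ball 0 r) μ := by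
  have : Nontrivial E := nontrivial_of_finrank_pos (R := ℝ) (by lia)
  rw [← integrable_indicator_iff measurableSet_ball, indicator_ball_inv_norm,
    integrable_fun_norm_addHaar, integrableOn_congr_fun (pow_smul_indicator_Iio_inv hE r)
      measurableSet_Ioi, IntegrableOn, integrable_indicator_iff measurableSet_Iio, IntegrableOn,
    Measure.restrict_restrict measurableSet_Iio, Iio_inter_Ioi]
  exact (continuous_pow _).integrableOn_Icc.mono_set Ioo_subset_Icc_self

lemma setIntegral_ball_inv_norm (hE : 2 ≤ finrank ℝ E) (hr : 0 ≤ r) :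
    ∫ u in Metric.ball 0 r, ‖u‖⁻¹ ∂μ =
      finrank ℝ E * μ.real (Metric.ball 0 1) * (r ^ (finrank ℝ E - 1) / (finrank ℝ E - 1)) := by
  have : Nontrivial E := nontrivial_of_finrank_pos (R := ℝ) (by lia)
  rw [← integral_indicator measurableSet_ball, indicator_ball_inv_norm,
    integral_fun_norm_addHaar, setIntegral_congr_fun measurableSet_Ioi
      (pow_smul_indicator_Iio_inv hE r), integral_indicator measurableSet_Iio,
    Measure.restrict_restrict measurableSet_Iio, Iio_inter_Ioi, ← integral_Ioc_eq_integral_Ioo,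
    ← intervalIntegral.integral_of_le hr, integral_pow]
  obtain ⟨k, hk⟩ := Nat.exists_eq_add_of_le' hE
  simp only [hk, Nat.reduceSubDiff, Nat.cast_add, Nat.cast_ofNat, nsmul_eq_mul, smul_eq_mul,
    zero_pow (Nat.succ_ne_zero k), sub_zero]
  ring

lemma setIntegral_ball_inv_norm_complex (hr : 0 ≤ r) :
    ∫ u in Metric.ball (0 : ℂ) r, ‖u‖⁻¹ = 2 * π * r := by
  rw [setIntegral_ball_inv_norm _ Complex.finrank_real_complex.ge hr]
  norm_num [Measure.real, Complex.finrank_real_complex]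

end BallInv

section GaussianMixture

variable {T : Type*} [MeasurableSpace T] {ν : Measure T} {b c : T → ℝ} {q : ℝ}

lemma integral_rpow_norm_mul_const_mul_gaussian (hq : -2 < q) {b : ℝ} (hb : 0 < b) (c : ℝ) :
    ∫ w : ℂ, ‖w‖ ^ q * (c * exp (-b * ‖w‖ ^ 2)) =
      π * Gamma ((q + 2) / 2) * (c * b ^ (-(q + 2) / 2)) := by
  have h := Complex.integral_rpow_mul_exp_neg_mul_rpow one_le_two hq hb
  simp only [rpow_two] at h
  simp only [mul_left_comm _ c, integral_const_mul, h]
  ring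

lemma integrable_rpow_norm_mul_const_mul_gaussian (hq : -2 < q) {b : ℝ} (hb : 0 < b) (c : ℝ) :
    Integrable fun w : ℂ ↦ ‖w‖ ^ q * (c * exp (-b * ‖w‖ ^ 2)) := by
  have hΓ : 0 < Gamma ((q + 2) / 2) := Gamma_pos_of_pos (by linarith)
  have h : Integrable fun w : ℂ ↦ ‖w‖ ^ q * (1 * exp (-b * ‖w‖ ^ 2)) :=
    .of_integral_ne_zero <| by
      rw [integral_rpow_norm_mul_const_mul_gaussian hq hb]
      positivity
  simpa only [mul_left_comm _ c, one_mul] using h.const_mul c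

lemma sq_norm_mul_exp_neg_mul_sq_norm_le {E : Type*} [SeminormedAddCommGroup E] {b : ℝ}
    (hb : 0 < b) (w : E) : ‖w‖ ^ 2 * exp (-b * ‖w‖ ^ 2) ≤ b⁻¹ := by
  have h := (mul_exp_neg_le_exp_neg_one (b * ‖w‖ ^ 2)).trans (exp_le_one_iff.2 (by norm_num))
  rwa [← one_div, le_div_iff₀' hb, ← mul_assoc, neg_mul]

lemma sq_norm_mul_integral_gaussian_le {E : Type*} [SeminormedAddCommGroup E]
    (hb : ∀ᵐ t ∂ν, 0 < b t) (hc : ∀ᵐ t ∂ν, 0 ≤ c t) (hbc : Integrable (fun t ↦ c t * (b t)⁻¹) ν)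
    (w : E) : ‖w‖ ^ 2 * ∫ t, c t * exp (-b t * ‖w‖ ^ 2) ∂ν ≤ ∫ t, c t * (b t)⁻¹ ∂ν := by
  rw [← integral_const_mul]
  refine integral_mono_of_nonneg ?_ hbc ?_
  · filter_upwards [hc] with t ht
    positivity
  · filter_upwards [hb, hc] with t htb htc
    rw [mul_left_comm]
    exact mul_le_mul_of_nonneg_left (sq_norm_mul_exp_neg_mul_sq_norm_le htb w) htc

variable [SFinite ν]

lemma integrable_prod_rpow_norm_mul_gaussian (hq : -2 < q) (hb_meas : Measurable b)
    (hc_meas : Measurable c) (hb : ∀ᵐ t ∂ν, 0 < b t)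
    (hbc : Integrable (fun t ↦ c t * b t ^ (-(q + 2) / 2)) ν) :
    Integrable (fun p : ℂ × T ↦ ‖p.1‖ ^ q * (c p.2 * exp (-b p.2 * ‖p.1‖ ^ 2)))
      (volume.prod ν) := by
  refine (integrable_prod_iff' (Measurable.aestronglyMeasurable (by fun_prop))).2 ⟨?_, ?_⟩
  · filter_upwards [hb] with t ht
    exact integrable_rpow_norm_mul_const_mul_gaussian hq ht _
  · refine (hbc.norm.const_mul (π * Gamma ((q + 2) / 2))).congr ?_
    filter_upwards [hb] with t ht
    simp only [norm_mul, norm_of_nonneg (rpow_nonneg (norm_nonneg _) _),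
      norm_of_nonneg (exp_nonneg _), norm_of_nonneg (rpow_nonneg ht.le _),
      integral_rpow_norm_mul_const_mul_gaussian hq ht]

lemma integral_rpow_norm_mul_integral_gaussian (hq : -2 < q) (hb_meas : Measurable b)
    (hc_meas : Measurable c) (hb : ∀ᵐ t ∂ν, 0 < b t)
    (hbc : Integrable (fun t ↦ c t * b t ^ (-(q + 2) / 2)) ν) :
    ∫ w : ℂ, ‖w‖ ^ q * ∫ t, c t * exp (-b t * ‖w‖ ^ 2) ∂ν =
      π * Gamma ((q + 2) / 2) * ∫ t, c t * b t ^ (-(q + 2) / 2) ∂ν := by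
  simp only [← integral_const_mul]
  rw [integral_integral_swap (integrable_prod_rpow_norm_mul_gaussian hq hb_meas hc_meas hb hbc)]
  refine integral_congr_ae ?_
  filter_upwards [hb] with t ht
  exact integral_rpow_norm_mul_const_mul_gaussian hq ht _

lemma integrable_rpow_norm_mul_integral_gaussian (hq : -2 < q) (hb_meas : Measurable b)
    (hc_meas : Measurable c) (hb : ∀ᵐ t ∂ν, 0 < b t)
    (hbc : Integrable (fun t ↦ c t * b t ^ (-(q + 2) / 2)) ν) :
    Integrable fun w : ℂ ↦ ‖w‖ ^ q * ∫ t, c t * exp (-b t * ‖w‖ ^ 2) ∂ν := by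
  simpa only [integral_const_mul] using
    (integrable_prod_rpow_norm_mul_gaussian hq hb_meas hc_meas hb hbc).integral_prod_left

end GaussianMixture

section CauchyKernel

variable {g : ℂ → ℂ} {B r : ℝ} {z : ℂ}

lemma sq_norm_mul_norm_inv_sub_sub_inv_mul_le (g : ℂ → ℂ) (z w : ℂ) :
    ‖z‖ ^ 2 * ‖((z - w)⁻¹ - z⁻¹) * g w‖ ≤ ‖w‖ * ‖g w‖ + ‖w‖ ^ 2 * ‖g w‖ / ‖z - w‖ := by
  rw [norm_mul, ← mul_assoc, mul_div_right_comm, ← add_mul]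
  gcongr
  exact sq_norm_mul_norm_inv_sub_sub_inv_le z w

lemma integrable_sq_norm_mul_div_norm_sub (hg₂ : Integrable fun w ↦ ‖w‖ ^ 2 * ‖g w‖)
    (hB : ∀ w, ‖w‖ ^ 2 * ‖g w‖ ≤ B) (z : ℂ) :
    Integrable fun w ↦ ‖w‖ ^ 2 * ‖g w‖ / ‖z - w‖ :=
  integrable_div_norm_sub one_pos hg₂ (fun w ↦ by positivity) hB
    (integrableOn_ball_inv_norm _ Complex.finrank_real_complex.ge 1) z

lemma integrable_inv_sub_sub_inv_mul (hz : z ≠ 0) (hg : AEStronglyMeasurable g)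
    (hg₁ : Integrable fun w ↦ ‖w‖ * ‖g w‖) (hg₂ : Integrable fun w ↦ ‖w‖ ^ 2 * ‖g w‖)
    (hB : ∀ w, ‖w‖ ^ 2 * ‖g w‖ ≤ B) :
    Integrable fun w ↦ ((z - w)⁻¹ - z⁻¹) * g w := by
  refine ((hg₁.add (integrable_sq_norm_mul_div_norm_sub hg₂ hB z)).const_mul (‖z‖ ^ 2)⁻¹).mono'
    ((Measurable.aestronglyMeasurable (by fun_prop)).mul hg) (.of_forall fun w ↦ ?_)
  rw [le_inv_mul_iff₀ (by positivity)]
  exact sq_norm_mul_norm_inv_sub_sub_inv_mul_le g z w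

lemma integrable_inv_sub_mul (hz : z ≠ 0) (hg : Integrable g)
    (hg₁ : Integrable fun w ↦ ‖w‖ * ‖g w‖) (hg₂ : Integrable fun w ↦ ‖w‖ ^ 2 * ‖g w‖)
    (hB : ∀ w, ‖w‖ ^ 2 * ‖g w‖ ≤ B) :
    Integrable fun w ↦ (z - w)⁻¹ * g w := by
  convert! (integrable_inv_sub_sub_inv_mul hz hg.aestronglyMeasurable hg₁ hg₂ hB).add
    (hg.const_mul z⁻¹) using 2 with w
  simp only [Pi.add_apply]
  ring

theorem sq_norm_mul_norm_integral_inv_sub_sub_inv_mul_le (hr : 0 < r)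
    (hg₁ : Integrable fun w ↦ ‖w‖ * ‖g w‖) (hg₂ : Integrable fun w ↦ ‖w‖ ^ 2 * ‖g w‖)
    (hB : ∀ w, ‖w‖ ^ 2 * ‖g w‖ ≤ B) (z : ℂ) :
    ‖z‖ ^ 2 * ‖∫ w, ((z - w)⁻¹ - z⁻¹) * g w‖ ≤
      (∫ w, ‖w‖ * ‖g w‖) + r⁻¹ * (∫ w, ‖w‖ ^ 2 * ‖g w‖) + 2 * π * r * B := by
  have hpot := integrable_sq_norm_mul_div_norm_sub hg₂ hB z
  calc ‖z‖ ^ 2 * ‖∫ w, ((z - w)⁻¹ - z⁻¹) * g w‖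
      ≤ ∫ w, ‖z‖ ^ 2 * ‖((z - w)⁻¹ - z⁻¹) * g w‖ := by
        rw [integral_const_mul]
        gcongr
        exact norm_integral_le_integral_norm _
    _ ≤ ∫ w, ‖w‖ * ‖g w‖ + ‖w‖ ^ 2 * ‖g w‖ / ‖z - w‖ :=
        integral_mono_of_nonneg (.of_forall fun w ↦ by positivity) (hg₁.add hpot)
          (.of_forall (sq_norm_mul_norm_inv_sub_sub_inv_mul_le g z))
    _ ≤ (∫ w, ‖w‖ * ‖g w‖) + (r⁻¹ * (∫ w, ‖w‖ ^ 2 * ‖g w‖) + B * (2 * π * r)) := by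
        rw [integral_add hg₁ hpot, ← setIntegral_ball_inv_norm_complex hr.le]
        gcongr
        exact integral_div_norm_sub_le hr hg₂ (fun w ↦ by positivity) hB
          (integrableOn_ball_inv_norm _ Complex.finrank_real_complex.ge r) z
    _ = _ := by ring

end CauchyKernel

/-- The Bessel kernel `G_α` as a function on `ℂ`, the plane being identified with `ℂ` through
`Complex.equivRealProd`. -/
noncomputable def besselKernel (α : ℝ) (w : ℂ) : ℝ :=
  besselG α (Complex.equivRealProd w)

/-- The density, at the subordination parameter `t`, of the superposition of Gaussians that
defines the Bessel kernel. -/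
noncomputable def besselWeight (t : ℝ) : ℝ := 1 / t * exp (-t / (4 * π))

/-- The decay rate of the Gaussian at the subordination parameter `t` in the Bessel kernel
`G_α`. -/
noncomputable def besselRate (α t : ℝ) : ℝ := π / (t * α)

section BesselKernel

open Set

variable {α q : ℝ}

lemma measurable_besselWeight : Measurable besselWeight := by
  unfold besselWeight
  fun_prop

lemma measurable_besselRate (α : ℝ) : Measurable (besselRate α) := by
  unfold besselRate
  fun_prop

lemma besselWeight_nonneg {t : ℝ} (ht : 0 ≤ t) : 0 ≤ besselWeight t := by
  unfold besselWeight
  positivity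

lemma besselRate_pos {t : ℝ} (hα : 0 < α) (ht : 0 < t) : 0 < besselRate α t := by
  unfold besselRate
  positivity

lemma besselKernel_eq_integral_gaussian (α : ℝ) (w : ℂ) :
    besselKernel α w = 1 / (4 * π * α) *
      ∫ t in Ioi 0, besselWeight t * exp (-besselRate α t * ‖w‖ ^ 2) := by
  simp only [besselKernel, besselG, besselWeight, besselRate, Complex.equivRealProd_apply,
    Complex.sq_norm, Complex.normSq_apply]
  congr! 3 with t
  ring_nf

lemma besselKernel_nonneg (hα : 0 ≤ α) (w : ℂ) : 0 ≤ besselKernel α w := by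
  rw [besselKernel_eq_integral_gaussian]
  refine mul_nonneg (by positivity) (setIntegral_nonneg measurableSet_Ioi fun t (ht : 0 < t) ↦ ?_)
  exact mul_nonneg (besselWeight_nonneg ht.le) (exp_nonneg _)

lemma ae_besselRate_pos (hα : 0 < α) :
    ∀ᵐ t ∂volume.restrict (Ioi (0 : ℝ)), 0 < besselRate α t := by
  filter_upwards [ae_restrict_mem measurableSet_Ioi] with t ht
  exact besselRate_pos hα ht

lemma besselWeight_mul_besselRate_rpow (hα : 0 < α) (q : ℝ) {t : ℝ} (ht : 0 < t) :
    besselWeight t * besselRate α t ^ (-(q + 2) / 2) =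
      (α / π) ^ ((q + 2) / 2) * (t ^ ((q + 2) / 2 - 1) * exp (-(1 / (4 * π) * t))) := by
  rw [besselWeight, besselRate, neg_div (2 : ℝ), rpow_neg (by positivity),
    ← inv_rpow (by positivity), inv_div, mul_comm t, mul_div_right_comm,
    mul_rpow (by positivity) ht.le, rpow_sub_one ht.ne']
  ring_nf

lemma integral_besselWeight_mul_besselRate_rpow (hα : 0 < α) (hq : -2 < q) :
    ∫ t in Ioi 0, besselWeight t * besselRate α t ^ (-(q + 2) / 2) =
      (4 * α) ^ ((q + 2) / 2) * Gamma ((q + 2) / 2) := by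
  rw [setIntegral_congr_fun measurableSet_Ioi
      fun t ht ↦ besselWeight_mul_besselRate_rpow hα q ht, integral_const_mul,
    integral_rpow_mul_exp_neg_mul_Ioi (by linarith) (by positivity), ← mul_assoc,
    ← mul_rpow (by positivity) (by positivity)]
  congr 2
  field_simp

lemma integrableOn_besselWeight_mul_besselRate_rpow (hα : 0 < α) (hq : -2 < q) :
    IntegrableOn (fun t ↦ besselWeight t * besselRate α t ^ (-(q + 2) / 2)) (Ioi 0) := by
  have hΓ : 0 < Gamma ((q + 2) / 2) := Gamma_pos_of_pos (by linarith)
  refine .of_integral_ne_zero ?_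
  rw [integral_besselWeight_mul_besselRate_rpow hα hq]
  positivity

lemma integrable_rpow_norm_mul_besselKernel (hα : 0 < α) (hq : -2 < q) :
    Integrable fun w ↦ ‖w‖ ^ q * besselKernel α w := by
  simp only [besselKernel_eq_integral_gaussian, mul_left_comm _ (1 / (4 * π * α))]
  exact (integrable_rpow_norm_mul_integral_gaussian hq (measurable_besselRate α)
    measurable_besselWeight (ae_besselRate_pos hα)
    (integrableOn_besselWeight_mul_besselRate_rpow hα hq)).const_mul _

lemma integral_rpow_norm_mul_besselKernel (hα : 0 < α) (hq : -2 < q) :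
    ∫ w, ‖w‖ ^ q * besselKernel α w = (4 * α) ^ (q / 2) * Gamma (q / 2 + 1) ^ 2 := by
  simp only [besselKernel_eq_integral_gaussian, mul_left_comm _ (1 / (4 * π * α))]
  rw [integral_const_mul, integral_rpow_norm_mul_integral_gaussian hq (measurable_besselRate α)
    measurable_besselWeight (ae_besselRate_pos hα)
    (integrableOn_besselWeight_mul_besselRate_rpow hα hq),
    integral_besselWeight_mul_besselRate_rpow hα hq, add_div, div_self two_ne_zero,
    rpow_add_one (by positivity)]
  field_simp

lemma sq_norm_mul_besselKernel_le (hα : 0 < α) (w : ℂ) :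
    ‖w‖ ^ 2 * besselKernel α w ≤ 1 / π := by
  have hmass := integral_besselWeight_mul_besselRate_rpow (q := 0) hα (by norm_num)
  have hint := integrableOn_besselWeight_mul_besselRate_rpow (q := 0) hα (by norm_num)
  simp only [zero_add, neg_div_self (two_ne_zero' ℝ), div_self (two_ne_zero' ℝ), rpow_neg_one,
    rpow_one, Gamma_one, mul_one] at hmass hint
  have hc : ∀ᵐ t ∂volume.restrict (Ioi (0 : ℝ)), 0 ≤ besselWeight t := by
    filter_upwards [ae_restrict_mem measurableSet_Ioi] with t ht
    exact besselWeight_nonneg (le_of_lt ht)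
  calc ‖w‖ ^ 2 * besselKernel α w
      ≤ 1 / (4 * π * α) * (4 * α) := by
        rw [besselKernel_eq_integral_gaussian, mul_left_comm, ← hmass]
        gcongr
        exact sq_norm_mul_integral_gaussian_le (ae_besselRate_pos hα) hc hint w
    _ = 1 / π := by field_simp

lemma integral_besselKernel (hα : 0 < α) : ∫ w, besselKernel α w = 1 := by
  simpa using integral_rpow_norm_mul_besselKernel (q := 0) hα (by norm_num)

lemma integrable_besselKernel (hα : 0 < α) : Integrable (besselKernel α) := by
  simpa using integrable_rpow_norm_mul_besselKernel (q := 0) hα (by norm_num)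

lemma integrable_norm_mul_besselKernel (hα : 0 < α) :
    Integrable fun w ↦ ‖w‖ * besselKernel α w := by
  simpa using integrable_rpow_norm_mul_besselKernel (q := 1) hα (by norm_num)

lemma integrable_sq_norm_mul_besselKernel (hα : 0 < α) :
    Integrable fun w ↦ ‖w‖ ^ 2 * besselKernel α w := by
  simpa using integrable_rpow_norm_mul_besselKernel (q := 2) hα (by norm_num)

lemma integral_norm_mul_besselKernel_le (hα : 0 < α) :
    ∫ w, ‖w‖ * besselKernel α w ≤ 2 * √α := by
  have hΓ : Gamma (1 / 2 + 1) ≤ 1 := by convert! Gamma_three_div_two_lt_one.le using 2; norm_num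
  have hΓ_pos : 0 < Gamma (1 / 2 + 1) := Gamma_pos_of_pos (by norm_num)
  have h := integral_rpow_norm_mul_besselKernel (q := 1) hα (by norm_num)
  simp only [rpow_one, ← sqrt_eq_rpow] at h
  calc ∫ w, ‖w‖ * besselKernel α w = √(4 * α) * Gamma (1 / 2 + 1) ^ 2 := h
    _ ≤ √(4 * α) := mul_le_of_le_one_right (sqrt_nonneg _) (pow_le_one₀ hΓ_pos.le hΓ)
    _ = 2 * √α := by rw [sqrt_mul zero_le_four, show (4 : ℝ) = 2 ^ 2 by norm_num,
        sqrt_sq zero_le_two]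

lemma integral_sq_norm_mul_besselKernel (hα : 0 < α) :
    ∫ w, ‖w‖ ^ 2 * besselKernel α w = 4 * α := by
  have h := integral_rpow_norm_mul_besselKernel (q := 2) hα (by norm_num)
  norm_num [Gamma_two] at h
  exact h

lemma norm_ofReal_besselKernel (hα : 0 ≤ α) (w : ℂ) :
    ‖(besselKernel α w : ℂ)‖ = besselKernel α w := by
  rw [Complex.norm_real, norm_of_nonneg (besselKernel_nonneg hα w)]

end BesselKernel

section BiotSavart

open Complex ComplexConjugate

lemma BSK_equivRealProd (z : ℂ) :
    BSK (equivRealProd z) = equivRealProd (conj ((2 * π * I)⁻¹ * z⁻¹)) := by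
  have h : conj ((2 * π * I)⁻¹ * z⁻¹) = (2 * π * normSq z)⁻¹ • (I * z) := by
    simp only [inv_def z, map_mul, map_inv₀, map_ofNat, conj_ofReal, conj_I, conj_conj,
      mul_inv, inv_I, map_neg, neg_neg, real_smul, ofReal_mul, ofReal_inv, ofReal_ofNat]
    ring
  simp only [h, BSK, equivRealProd_apply, smul_re, smul_im, I_mul_re, I_mul_im, smul_eq_mul,
    normSq_apply, ← sq, div_eq_inv_mul]

lemma integral_equivRealProd {F : Type*} [NormedAddCommGroup F] [NormedSpace ℝ F] (f : ℝ × ℝ → F) :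
    ∫ w, f (equivRealProd w) = ∫ y, f y :=
  volume_preserving_equiv_real_prod.integral_comp' f

lemma equivRealProd_integral {f : ℂ → ℂ} (hf : Integrable f) :
    equivRealProd (∫ w, f w) = (∫ w, (equivRealProd (f w)).1, ∫ w, (equivRealProd (f w)).2) :=
  Prod.ext (reCLM.integral_comp_comm hf).symm (imCLM.integral_comp_comm hf).symm

lemma BSKα_equivRealProd {α : ℝ} {z : ℂ}
    (h : Integrable fun w ↦ (z - w)⁻¹ * (besselKernel α w : ℂ)) :
    BSKα α (equivRealProd z) =
      equivRealProd (conj ((2 * π * I)⁻¹ * ∫ w, (z - w)⁻¹ * besselKernel α w)) := by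
  have hK : Integrable fun w ↦ conj ((2 * π * I)⁻¹ * ((z - w)⁻¹ * (besselKernel α w : ℂ))) :=
    (LinearIsometryEquiv.integrable_comp_iff conjLIE).2 (h.const_mul _)
  have hBSK (w : ℂ) :
      equivRealProd (conj ((2 * π * I)⁻¹ * ((z - w)⁻¹ * (besselKernel α w : ℂ)))) =
        besselKernel α w • BSK (z.re - w.re, z.im - w.im) := by
    change _ = besselKernel α w • BSK (equivRealProd (z - w))
    rw [BSK_equivRealProd, ← mul_assoc, map_mul, conj_ofReal, mul_comm, ← real_smul]
    exact Prod.ext (smul_re _ _) (smul_im _ _)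
  rw [← integral_const_mul, ← integral_conj, equivRealProd_integral hK, BSKα,
    ← integral_equivRealProd, ← integral_equivRealProd]
  simp only [hBSK, Prod.smul_fst, Prod.smul_snd, smul_eq_mul, mul_comm (besselKernel α _)]
  rfl

lemma sqrt_equivRealProd_conj_sub (a b : ℂ) :
    √(((equivRealProd (conj a)).1 - (equivRealProd (conj b)).1) ^ 2 +
      ((equivRealProd (conj a)).2 - (equivRealProd (conj b)).2) ^ 2) = ‖a - b‖ := by
  rw [← norm_conj (a - b), map_sub, norm_eq_sqrt_sq_add_sq]
  rfl

end BiotSavart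

section SmoothedCauchyKernel

variable {α : ℝ} {z : ℂ}

lemma integrable_inv_sub_mul_besselKernel (hα : 0 < α) (hz : z ≠ 0) :
    Integrable fun w ↦ (z - w)⁻¹ * (besselKernel α w : ℂ) := by
  refine integrable_inv_sub_mul (B := 1 / π) hz (integrable_besselKernel hα).ofReal ?_ ?_ ?_ <;>
    simp only [norm_ofReal_besselKernel hα.le]
  exacts [integrable_norm_mul_besselKernel hα, integrable_sq_norm_mul_besselKernel hα,
    sq_norm_mul_besselKernel_le hα]

lemma integral_inv_sub_sub_inv_mul_besselKernel (hα : 0 < α) (hz : z ≠ 0) :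
    ∫ w, ((z - w)⁻¹ - z⁻¹) * (besselKernel α w : ℂ) =
      (∫ w, (z - w)⁻¹ * (besselKernel α w : ℂ)) - z⁻¹ := by
  have hG : Integrable fun w ↦ (besselKernel α w : ℂ) := (integrable_besselKernel hα).ofReal
  simp only [sub_mul]
  rw [integral_sub (integrable_inv_sub_mul_besselKernel hα hz) (hG.const_mul _),
    integral_const_mul, integral_complex_ofReal, integral_besselKernel hα, Complex.ofReal_one,
    mul_one]

theorem norm_integral_inv_sub_mul_besselKernel_sub_inv_le (hα : 0 < α) (hz : z ≠ 0) :
    ‖(∫ w, (z - w)⁻¹ * (besselKernel α w : ℂ)) - z⁻¹‖ ≤ 8 * √α / ‖z‖ ^ 2 := by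
  have h := sq_norm_mul_norm_integral_inv_sub_sub_inv_mul_le (g := fun w ↦ besselKernel α w)
    (B := 1 / π) (sqrt_pos.2 hα)
  simp only [norm_ofReal_besselKernel hα.le] at h
  rw [le_div_iff₀' (by positivity), ← integral_inv_sub_sub_inv_mul_besselKernel hα hz]
  calc _ ≤ (∫ w, ‖w‖ * besselKernel α w) + (√α)⁻¹ * (∫ w, ‖w‖ ^ 2 * besselKernel α w) +
        2 * π * √α * (1 / π) :=
        h (integrable_norm_mul_besselKernel hα) (integrable_sq_norm_mul_besselKernel hα)
          (sq_norm_mul_besselKernel_le hα) z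
    _ ≤ 2 * √α + (√α)⁻¹ * (4 * √α ^ 2) + 2 * π * √α * (1 / π) := by
        rw [integral_sq_norm_mul_besselKernel hα, sq_sqrt hα.le]
        gcongr
        exact integral_norm_mul_besselKernel_le hα
    _ = 8 * √α := by
        have := sqrt_pos.2 hα
        field_simp
        norm_num

end SmoothedCauchyKernel

/-- `|K_α(x) - K(x)| ≤ C √α / |x|²` for all `x ≠ 0`, `α > 0`. -/
theorem stmt_13 :
    ∃ C > 0, ∀ (α : ℝ), 0 < α → ∀ x : ℝ × ℝ, x ≠ 0 →
      Real.sqrt (((BSKα α x).1 - (BSK x).1) ^ 2 + ((BSKα α x).2 - (BSK x).2) ^ 2)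
        ≤ C * Real.sqrt α / (x.1 ^ 2 + x.2 ^ 2) := by
  refine ⟨4 / π, by positivity, fun α hα x hx ↦ ?_⟩
  obtain ⟨z, rfl⟩ := Complex.equivRealProd.surjective x
  have hz : z ≠ 0 := fun h ↦ hx (by simp [h])
  have hnorm : (Complex.equivRealProd z).1 ^ 2 + (Complex.equivRealProd z).2 ^ 2 = ‖z‖ ^ 2 := by
    simp only [Complex.equivRealProd_apply, Complex.sq_norm, Complex.normSq_apply, ← sq]
  rw [BSKα_equivRealProd (integrable_inv_sub_mul_besselKernel hα hz), BSK_equivRealProd,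
    sqrt_equivRealProd_conj_sub, ← mul_sub, norm_mul, hnorm]
  calc _ ≤ ‖(2 * π * Complex.I)⁻¹‖ * (8 * √α / ‖z‖ ^ 2) := by
        gcongr
        exact norm_integral_inv_sub_mul_besselKernel_sub_inv_le hα hz
    _ = 4 / π * √α / ‖z‖ ^ 2 := by
        simp only [norm_inv, norm_mul, Complex.norm_ofNat, Complex.norm_real, Complex.norm_I,
          norm_of_nonneg pi_pos.le]
        ring
end

section
/- For every $\alpha > 0$ and $y_2 > 0$, $\int_{\mathbb{R}} \partial_2 H_\alpha(x_1, y_2)\,dx_1 = \frac{1}{2} - \frac{1}{2}e^{-y_2/\sqrt{\alpha}}$. -/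
open MeasureTheory Real

/-- `∂₂ Gα`, the partial derivative of `Gα` in the second variable. -/
noncomputable def d2G (α : ℝ) (x : ℝ × ℝ) : ℝ :=
  deriv (fun y => besselG α (x.1, y)) x.2

/-- `Hα = α Gα + (1/2π) ln|·|`. -/
noncomputable def Hfun (α : ℝ) (x : ℝ × ℝ) : ℝ :=
  α * besselG α x + (1 / (2 * π)) * Real.log (Real.sqrt (x.1 ^ 2 + x.2 ^ 2))

/-- `∂₂ Hα`. -/
noncomputable def d2H (α : ℝ) (x : ℝ × ℝ) : ℝ :=
  deriv (fun y => Hfun α (x.1, y)) x.2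

open Filter Topology Set ProbabilityTheory
open scoped Nat

/-!
The Bessel kernel is a superposition over `t > 0` of Gaussians `exp (-π |x|² / (tα))`. Applying `∂₂`
under the `t`-integral and exchanging the two integrations turns `∫ ∂₂Gα dx₁` into a Gaussian
integral in `x₁`, followed by `∫ t ^ (-3/2) exp (-(a² / t + b² t)) dt` over `(0, ∞)`. The latter
integrand has an explicit primitive in terms of the error function, and its integral is
`√π / a * exp (-2ab)`. The logarithmic part of `∂₂Hα` is half the density of the Cauchy
distribution of scale `x₂`, so it contributes `1 / 2`.
-/

theorem integrableOn_and_integral_Ioi_of_hasDerivAt_of_nonneg_of_tendsto {f f' : ℝ → ℝ} {a l m : ℝ}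
    (hderiv : ∀ t ∈ Ioi a, HasDerivAt f (f' t) t) (hnonneg : ∀ t ∈ Ioi a, 0 ≤ f' t)
    (hleft : Tendsto f (𝓝[>] a) (𝓝 l)) (htop : Tendsto f atTop (𝓝 m)) :
    IntegrableOn f' (Ioi a) ∧ ∫ t in Ioi a, f' t = m - l := by
  have hcont : ContinuousWithinAt (Function.update f a l) (Ici a) a := by
    rwa [continuousWithinAt_update_same, Ici_sdiff_left]
  have hderiv' : ∀ t ∈ Ioi a, HasDerivAt (Function.update f a l) (f' t) t := fun t ht ↦ by
    refine (hderiv t ht).congr_of_eventuallyEq ?_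
    filter_upwards [lt_mem_nhds (mem_Ioi.mp ht)] with s hs using Function.update_of_ne hs.ne' l f
  have htop' : Tendsto (Function.update f a l) atTop (𝓝 m) := by
    refine htop.congr' ?_
    filter_upwards [eventually_gt_atTop a] with s hs using (Function.update_of_ne hs.ne' l f).symm
  refine ⟨integrableOn_Ioi_deriv_of_nonneg hcont hderiv' hnonneg htop', ?_⟩
  rw [integral_Ioi_of_hasDerivAt_of_nonneg hcont hderiv' hnonneg htop', Function.update_self]

section GaussianPrimitive

/-- The primitive of `exp (-v²)` vanishing at `0`, i.e. `√π / 2` times the error function. -/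
noncomputable def gaussianPrimitive (u : ℝ) : ℝ :=
  ∫ v in (0 : ℝ)..u, exp (-v ^ 2)

theorem hasDerivAt_gaussianPrimitive (u : ℝ) :
    HasDerivAt gaussianPrimitive (exp (-u ^ 2)) u :=
  (show Continuous fun v : ℝ ↦ exp (-v ^ 2) by fun_prop).integral_hasStrictDerivAt 0 u
    |>.hasDerivAt

theorem gaussianPrimitive_neg (u : ℝ) : gaussianPrimitive (-u) = -gaussianPrimitive u := by
  have h := intervalIntegral.integral_comp_neg (a := 0) (b := u) fun v : ℝ ↦ exp (-v ^ 2)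
  simp only [neg_sq, neg_zero] at h
  rw [gaussianPrimitive, gaussianPrimitive, h, intervalIntegral.integral_symm]

theorem tendsto_gaussianPrimitive_atTop : Tendsto gaussianPrimitive atTop (𝓝 (√π / 2)) := by
  have hint : Integrable fun v : ℝ ↦ exp (-v ^ 2) := by
    simpa using integrable_exp_neg_mul_sq one_pos
  have hval : ∫ v in Ioi (0 : ℝ), exp (-v ^ 2) = √π / 2 := by
    simpa using integral_gaussian_Ioi 1
  exact hval ▸ intervalIntegral_tendsto_integral_Ioi 0 hint.integrableOn tendsto_id

theorem tendsto_gaussianPrimitive_atBot : Tendsto gaussianPrimitive atBot (𝓝 (-(√π / 2))) :=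
  (tendsto_gaussianPrimitive_atTop.comp tendsto_neg_atBot_atTop).neg.congr fun u ↦ by
    simp [gaussianPrimitive_neg]

end GaussianPrimitive

section GaussianBranch

variable {a b t : ℝ}

/-- The contribution of the substitution `u = b√t - a/√t` to a primitive of
`t ^ (-3/2) * exp (-(a² / t + b² t))`; the primitive is obtained by adding the contributions of `b`
and `-b`. -/
noncomputable def gaussianBranch (a b t : ℝ) : ℝ :=
  exp (-(2 * a * b)) * gaussianPrimitive (b * √t - a / √t)

theorem gaussianBranch_neg_right (a b t : ℝ) :
    gaussianBranch a (-b) t = -gaussianBranch (-a) b t := by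
  have hargument : -b * √t - a / √t = -(b * √t - -a / √t) := by ring
  rw [gaussianBranch, gaussianBranch, hargument, gaussianPrimitive_neg]
  ring_nf

theorem hasDerivAt_gaussianBranch (a b : ℝ) (ht : 0 < t) :
    HasDerivAt (gaussianBranch a b)
      (exp (-(a ^ 2 / t + b ^ 2 * t)) * (b / (2 * √t) + a / (2 * (t * √t)))) t := by
  have hsq : √t ^ 2 = t := sq_sqrt ht.le
  have hs : 0 < √t := sqrt_pos.2 ht
  have hsqrt : HasDerivAt (fun t ↦ √t) (1 / (2 * √t)) t := hasDerivAt_sqrt ht.ne'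
  have hsubst : HasDerivAt (fun t ↦ b * √t - a / √t) (b / (2 * √t) + a / (2 * (t * √t))) t := by
    refine ((hsqrt.const_mul b).sub ((hasDerivAt_const t a).div hsqrt hs.ne')).congr_deriv ?_
    rw [hsq]
    field_simp
    ring
  have hexp : exp (-(2 * a * b)) * exp (-(b * √t - a / √t) ^ 2)
      = exp (-(a ^ 2 / t + b ^ 2 * t)) := by
    have hsquare : (b * √t - a / √t) ^ 2 = b ^ 2 * t - 2 * a * b + a ^ 2 / t := by
      rw [sub_sq, mul_pow, div_pow, hsq]
      field_simp
    rw [← exp_add, hsquare]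
    ring_nf
  refine (((hasDerivAt_gaussianPrimitive _).comp t hsubst).const_mul _).congr_deriv ?_
  rw [← mul_assoc, hexp]

theorem tendsto_gaussianBranch_nhdsGT_zero (ha : 0 < a) (b : ℝ) :
    Tendsto (gaussianBranch a b) (𝓝[>] 0) (𝓝 (exp (-(2 * a * b)) * -(√π / 2))) := by
  have hsqrt : Tendsto (fun t ↦ √t) (𝓝[>] 0) (𝓝[>] 0) :=
    tendsto_nhdsWithin_iff.2
      ⟨by simpa using continuous_sqrt.continuousWithinAt.tendsto (s := Ioi 0) (x := 0),
        eventually_mem_nhdsWithin.mono fun _ ↦ sqrt_pos.2⟩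
  have hmul : Tendsto (fun t ↦ b * √t) (𝓝[>] 0) (𝓝 (b * 0)) :=
    (hsqrt.mono_right nhdsWithin_le_nhds).const_mul b
  have hdiv : Tendsto (fun t ↦ a / √t) (𝓝[>] 0) atTop :=
    (tendsto_inv_nhdsGT_zero.comp hsqrt).const_mul_atTop ha
  have hsubst : Tendsto (fun t ↦ b * √t - a / √t) (𝓝[>] 0) atBot :=
    (hmul.add_atBot (tendsto_neg_atTop_atBot.comp hdiv)).congr fun _ ↦ (sub_eq_add_neg _ _).symm
  exact (tendsto_gaussianPrimitive_atBot.comp hsubst).const_mul _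

theorem tendsto_gaussianBranch_atTop (a : ℝ) (hb : 0 < b) :
    Tendsto (gaussianBranch a b) atTop (𝓝 (exp (-(2 * a * b)) * (√π / 2))) := by
  have hmul : Tendsto (fun t ↦ b * √t) atTop atTop := tendsto_sqrt_atTop.const_mul_atTop hb
  have hdiv : Tendsto (fun t ↦ a / √t) atTop (𝓝 0) := tendsto_sqrt_atTop.const_div_atTop a
  have hsubst : Tendsto (fun t ↦ b * √t - a / √t) atTop atTop := by
    simpa only [sub_eq_add_neg] using hmul.atTop_add hdiv.neg
  exact (tendsto_gaussianPrimitive_atTop.comp hsubst).const_mul _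

theorem integrableOn_and_integral_Ioi_inv_mul_sqrt_mul_exp_neg_div_add_mul
    (ha : 0 < a) (hb : 0 < b) :
    IntegrableOn (fun t : ℝ ↦ (t * √t)⁻¹ * exp (-(a ^ 2 / t + b ^ 2 * t))) (Ioi 0) ∧
      ∫ t in Ioi (0 : ℝ), (t * √t)⁻¹ * exp (-(a ^ 2 / t + b ^ 2 * t))
        = √π / a * exp (-(2 * a * b)) := by
  have hderiv : ∀ t ∈ Ioi (0 : ℝ), HasDerivAt (fun t ↦ a⁻¹ *
      (gaussianBranch a b t + gaussianBranch a (-b) t))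
      ((t * √t)⁻¹ * exp (-(a ^ 2 / t + b ^ 2 * t))) t := fun t ht ↦ by
    refine (((hasDerivAt_gaussianBranch a b ht).add
      (hasDerivAt_gaussianBranch a (-b) ht)).const_mul a⁻¹).congr_deriv ?_
    rw [neg_sq]
    field_simp
    ring
  have hnonneg : ∀ t ∈ Ioi (0 : ℝ), 0 ≤ (t * √t)⁻¹ * exp (-(a ^ 2 / t + b ^ 2 * t)) :=
    fun t ht ↦ mul_nonneg (inv_nonneg.2 (mul_nonneg (le_of_lt ht) (sqrt_nonneg t))) (exp_nonneg _)
  have hzero := ((tendsto_gaussianBranch_nhdsGT_zero ha b).add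
    (tendsto_gaussianBranch_nhdsGT_zero ha (-b))).const_mul a⁻¹
  have htop : Tendsto (gaussianBranch a (-b)) atTop (𝓝 (-(exp (-(2 * -a * b)) * (√π / 2)))) :=
    (tendsto_gaussianBranch_atTop (-a) hb).neg.congr fun t ↦ (gaussianBranch_neg_right a b t).symm
  obtain ⟨hint, hval⟩ :=
    integrableOn_and_integral_Ioi_of_hasDerivAt_of_nonneg_of_tendsto hderiv hnonneg hzero
      (((tendsto_gaussianBranch_atTop a hb).add htop).const_mul a⁻¹)
  refine ⟨hint, hval.trans ?_⟩
  rw [show 2 * -a * b = 2 * a * -b by ring]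
  ring

end GaussianBranch

section LaplaceInverse

variable {c r t : ℝ}

theorem inv_pow_mul_exp_neg_div_le (n : ℕ) (hc : 0 < c) (ht : 0 < t) :
    (t ^ n)⁻¹ * exp (-(c / t)) ≤ n ! / c ^ n := by
  have h : (c / t) ^ n / n ! ≤ exp (c / t) := pow_div_factorial_le_exp (c / t) (by positivity) n
  calc (t ^ n)⁻¹ * exp (-(c / t)) ≤ (t ^ n)⁻¹ * ((c / t) ^ n / n !)⁻¹ := by
        rw [exp_neg]
        gcongr
    _ = n ! / c ^ n := by
        rw [div_pow]
        field_simp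

theorem hasDerivAt_integral_inv_pow_mul_exp_neg_div {w : ℝ → ℝ} (hw : IntegrableOn w (Ioi 0))
    (n : ℕ) (hr : 0 < r) :
    HasDerivAt (fun r ↦ ∫ t in Ioi (0 : ℝ), (t ^ n)⁻¹ * exp (-(r / t)) * w t)
      (-∫ t in Ioi (0 : ℝ), (t ^ (n + 1))⁻¹ * exp (-(r / t)) * w t) r := by
  have hmeas (k : ℕ) (s : ℝ) : AEStronglyMeasurable
      (fun t : ℝ ↦ (t ^ k)⁻¹ * exp (-(s / t)) * w t) (volume.restrict (Ioi 0)) :=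
    (show Measurable fun t : ℝ ↦ (t ^ k)⁻¹ * exp (-(s / t)) by
      fun_prop).aestronglyMeasurable.mul hw.aestronglyMeasurable
  have hbound {s : ℝ} (hs : 0 < s) (k : ℕ) {t : ℝ} (ht : 0 < t) :
      ‖(t ^ k)⁻¹ * exp (-(s / t)) * w t‖ ≤ k ! / s ^ k * ‖w t‖ := by
    rw [norm_mul, norm_of_nonneg (by positivity)]
    gcongr
    exact inv_pow_mul_exp_neg_div_le k hs ht
  rw [← integral_neg]
  refine (hasDerivAt_integral_of_dominated_loc_of_deriv_le
    (F' := fun s t ↦ -((t ^ (n + 1))⁻¹ * exp (-(s / t)) * w t))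
    (bound := fun t ↦ (n + 1)! / (r / 2) ^ (n + 1) * ‖w t‖) (Ioi_mem_nhds (half_lt_self hr))
    (Eventually.of_forall (hmeas n)) ?_ (hmeas (n + 1) r).neg ?_ (hw.norm.const_mul _) ?_).2
  · refine (hw.norm.const_mul (n ! / r ^ n)).mono' (hmeas n r) ?_
    filter_upwards [ae_restrict_mem measurableSet_Ioi] with t ht using hbound hr n ht
  · filter_upwards [ae_restrict_mem measurableSet_Ioi] with t ht s (hs : r / 2 < s)
    rw [norm_neg]
    have hs0 : 0 < s := (half_pos hr).trans hs
    refine (hbound hs0 (n + 1) ht).trans ?_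
    gcongr
  · filter_upwards with t s _
    refine ((((hasDerivAt_id s).div_const t).neg.exp.const_mul (t ^ n)⁻¹).mul_const
      (w t)).congr_deriv ?_
    simp only [id, pow_succ, mul_inv, Pi.neg_apply]
    ring

end LaplaceInverse

section DampedHeatKernel

variable {c d t y : ℝ}

/-- The heat-type kernel `t⁻² exp (-c |(x, y)|² / t)` damped by `exp (-d t)`. For `c = π / α` and
`d = 1 / (4π)` it is, up to a factor independent of `x` and `t`, the integrand of `∂₂Gα (x, y)`. -/
noncomputable def dampedHeatKernel (c d y x t : ℝ) : ℝ :=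
  (t ^ 2)⁻¹ * exp (-(c * (x ^ 2 + y ^ 2) / t)) * exp (-(d * t))

theorem dampedHeatKernel_nonneg (c d y x t : ℝ) : 0 ≤ dampedHeatKernel c d y x t := by
  unfold dampedHeatKernel
  positivity

theorem measurable_uncurry_dampedHeatKernel (c d y : ℝ) :
    Measurable (Function.uncurry (dampedHeatKernel c d y)) := by
  unfold Function.uncurry dampedHeatKernel
  fun_prop

theorem dampedHeatKernel_eq_mul_gaussian (c d y x t : ℝ) :
    dampedHeatKernel c d y x t
      = (t ^ 2)⁻¹ * exp (-(c * y ^ 2 / t + d * t)) * exp (-(c / t) * x ^ 2) := by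
  rw [dampedHeatKernel, mul_assoc, mul_assoc, ← exp_add, ← exp_add]
  ring_nf

theorem integrable_dampedHeatKernel (hc : 0 < c) (d y : ℝ) (ht : 0 < t) :
    Integrable fun x ↦ dampedHeatKernel c d y x t := by
  simp only [dampedHeatKernel_eq_mul_gaussian]
  exact (integrable_exp_neg_mul_sq (div_pos hc ht)).const_mul _

theorem integral_dampedHeatKernel (c d y : ℝ) (ht : 0 < t) :
    ∫ x, dampedHeatKernel c d y x t
      = √(π / c) * ((t * √t)⁻¹ * exp (-(c * y ^ 2 / t + d * t))) := by
  have hsqrt : (t ^ 2)⁻¹ * √t = (t * √t)⁻¹ := by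
    field_simp
    exact sq_sqrt ht.le
  simp only [dampedHeatKernel_eq_mul_gaussian]
  rw [integral_const_mul, integral_gaussian, show π / (c / t) = π / c * t by
    rw [div_div_eq_mul_div, mul_div_right_comm], sqrt_mul' _ ht.le, ← hsqrt]
  ring

theorem integrableOn_and_integral_Ioi_integral_dampedHeatKernel
    (hc : 0 < c) (hd : 0 < d) (hy : 0 < y) :
    IntegrableOn (fun t ↦ ∫ x, dampedHeatKernel c d y x t) (Ioi 0) ∧
      ∫ t in Ioi (0 : ℝ), ∫ x, dampedHeatKernel c d y x t
        = π / (c * y) * exp (-(2 * √(c * d) * y)) := by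
  have hsc : 0 < √c := sqrt_pos.2 hc
  obtain ⟨hint, hval⟩ := integrableOn_and_integral_Ioi_inv_mul_sqrt_mul_exp_neg_div_add_mul
    (mul_pos hsc hy) (sqrt_pos.2 hd)
  rw [mul_pow, sq_sqrt hc.le, sq_sqrt hd.le] at hint hval
  have hinner : EqOn (fun t ↦ ∫ x, dampedHeatKernel c d y x t)
      (fun t ↦ √(π / c) * ((t * √t)⁻¹ * exp (-(c * y ^ 2 / t + d * t)))) (Ioi 0) :=
    fun t ht ↦ integral_dampedHeatKernel c d y ht
  refine ⟨IntegrableOn.congr_fun (hint.const_mul _) hinner.symm measurableSet_Ioi, ?_⟩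
  have hprefactor : √(π / c) * (√π / (√c * y)) = π / (c * y) := by
    rw [sqrt_div pi_pos.le, div_mul_div_comm, mul_self_sqrt pi_pos.le, ← mul_assoc,
      mul_self_sqrt hc.le]
  rw [setIntegral_congr_fun measurableSet_Ioi hinner, integral_const_mul, hval, ← mul_assoc,
    hprefactor, sqrt_mul hc.le]
  ring_nf

theorem integrable_uncurry_dampedHeatKernel (hc : 0 < c) (hd : 0 < d) (hy : 0 < y) :
    Integrable (Function.uncurry (dampedHeatKernel c d y))
      (volume.prod (volume.restrict (Ioi 0))) := by
  refine (integrable_prod_iff'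
    (measurable_uncurry_dampedHeatKernel c d y).aestronglyMeasurable).2 ⟨?_, ?_⟩
  · filter_upwards [ae_restrict_mem measurableSet_Ioi] with t ht
      using integrable_dampedHeatKernel hc d y ht
  · simp only [Function.uncurry, norm_of_nonneg (dampedHeatKernel_nonneg c d y _ _)]
    exact (integrableOn_and_integral_Ioi_integral_dampedHeatKernel hc hd hy).1

theorem integral_integral_Ioi_dampedHeatKernel (hc : 0 < c) (hd : 0 < d) (hy : 0 < y) :
    ∫ x, ∫ t in Ioi (0 : ℝ), dampedHeatKernel c d y x t
      = π / (c * y) * exp (-(2 * √(c * d) * y)) := by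
  rw [integral_integral_swap (integrable_uncurry_dampedHeatKernel hc hd hy),
    (integrableOn_and_integral_Ioi_integral_dampedHeatKernel hc hd hy).2]

end DampedHeatKernel

section BesselKernel

variable {α x y : ℝ}

theorem hasDerivAt_sq_add_sq_right (x y : ℝ) :
    HasDerivAt (fun y ↦ x ^ 2 + y ^ 2) (2 * y) y := by
  simpa using (hasDerivAt_pow 2 y).const_add (x ^ 2)

theorem hasDerivAt_besselG (hα : 0 < α) (hxy : 0 < x ^ 2 + y ^ 2) :
    HasDerivAt (fun y ↦ besselG α (x, y))
      (-(y / (2 * α ^ 2)) *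
        ∫ t in Ioi (0 : ℝ), dampedHeatKernel (π / α) (1 / (4 * π)) y x t) y := by
  have hbessel : (fun y ↦ besselG α (x, y)) = fun y ↦ 1 / (4 * π * α) * ∫ t in Ioi (0 : ℝ),
      (t ^ 1)⁻¹ * exp (-(π / α * (x ^ 2 + y ^ 2) / t)) * exp (-(1 / (4 * π) * t)) := by
    have hexponent (y t : ℝ) :
        -(π * (x ^ 2 + y ^ 2)) / (t * α) = -(π / α * (x ^ 2 + y ^ 2) / t) := by
      rw [neg_div, mul_comm t, ← div_div, mul_div_right_comm π]
    have hdamping (t : ℝ) : -t / (4 * π) = -(1 / (4 * π) * t) := by ring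
    simp only [besselG, hexponent, hdamping, one_div, pow_one]
  have hweight : IntegrableOn (fun t : ℝ ↦ exp (-(1 / (4 * π) * t))) (Ioi 0) := by
    simpa only [neg_mul] using exp_neg_integrableOn_Ioi 0 (b := 1 / (4 * π)) (by positivity)
  have hradius : HasDerivAt (fun y ↦ π / α * (x ^ 2 + y ^ 2)) (π / α * (2 * y)) y :=
    (hasDerivAt_sq_add_sq_right x y).const_mul (π / α)
  have hsuperposition := hasDerivAt_integral_inv_pow_mul_exp_neg_div hweight 1
    (mul_pos (div_pos pi_pos hα) hxy)
  rw [hbessel]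
  refine ((hsuperposition.comp y hradius).const_mul (1 / (4 * π * α))).congr_deriv ?_
  simp only [dampedHeatKernel]
  field_simp
  ring

theorem hasDerivAt_log_sqrt_sq_add_sq (hxy : 0 < x ^ 2 + y ^ 2) :
    HasDerivAt (fun y ↦ log √(x ^ 2 + y ^ 2)) (y / (x ^ 2 + y ^ 2)) y := by
  have hlog : (fun y ↦ log √(x ^ 2 + y ^ 2)) = fun y ↦ log (x ^ 2 + y ^ 2) / 2 := by
    funext y
    exact log_sqrt (by positivity)
  rw [hlog]
  refine (((hasDerivAt_sq_add_sq_right x y).log hxy.ne').div_const 2).congr_deriv ?_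
  field_simp

theorem d2G_eq_integral_dampedHeatKernel (hα : 0 < α) (hxy : 0 < x ^ 2 + y ^ 2) :
    d2G α (x, y) = -(y / (2 * α ^ 2)) *
      ∫ t in Ioi (0 : ℝ), dampedHeatKernel (π / α) (1 / (4 * π)) y x t :=
  (hasDerivAt_besselG hα hxy).deriv

theorem d2H_eq_d2G_add_cauchyPDFReal (hα : 0 < α) (x : ℝ) (hy : 0 < y) :
    d2H α (x, y) = α * d2G α (x, y) + 1 / 2 * cauchyPDFReal 0 y.toNNReal x := by
  have hxy : 0 < x ^ 2 + y ^ 2 := by positivity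
  have hG : HasDerivAt (fun y ↦ besselG α (x, y)) (d2G α (x, y)) y :=
    (hasDerivAt_besselG hα hxy).differentiableAt.hasDerivAt
  have hH : d2H α (x, y) = α * d2G α (x, y) + 1 / (2 * π) * (y / (x ^ 2 + y ^ 2)) :=
    ((hG.const_mul α).add ((hasDerivAt_log_sqrt_sq_add_sq hxy).const_mul (1 / (2 * π)))).deriv
  rw [hH, cauchyPDFReal_def, coe_toNNReal y hy.le, sub_zero]
  field_simp

theorem integrable_d2G (hα : 0 < α) (hy : 0 < y) : Integrable fun x ↦ d2G α (x, y) := by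
  have hrepr (x : ℝ) := d2G_eq_integral_dampedHeatKernel hα (show 0 < x ^ 2 + y ^ 2 by positivity)
  simp only [hrepr]
  exact (integrable_uncurry_dampedHeatKernel (div_pos pi_pos hα) (by positivity)
    hy).integral_prod_left.const_mul _

theorem integral_d2G (hα : 0 < α) (hy : 0 < y) :
    ∫ x, d2G α (x, y) = -(1 / (2 * α)) * exp (-y / √α) := by
  have hrepr (x : ℝ) := d2G_eq_integral_dampedHeatKernel hα (show 0 < x ^ 2 + y ^ 2 by positivity)
  have hrate : √(π / α * (1 / (4 * π))) = 1 / (2 * √α) := by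
    have hsquare : π / α * (1 / (4 * π)) = (1 / (2 * √α)) ^ 2 := by
      rw [div_pow, mul_pow, sq_sqrt hα.le]
      field_simp
      norm_num
    rw [hsquare, sqrt_sq (by positivity)]
  have hexponent : -(2 * (1 / (2 * √α)) * y) = -y / √α := by field_simp
  simp only [hrepr]
  rw [integral_const_mul, integral_integral_Ioi_dampedHeatKernel (div_pos pi_pos hα)
    (by positivity) hy, hrate, hexponent]
  field_simp

end BesselKernel

/-- `∫_ℝ ∂₂Hα(x₁, y₂) dx₁ = 1/2 - (1/2) e^{-y₂/√α}`. -/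
theorem stmt_15 (α : ℝ) (hα : 0 < α) (y₂ : ℝ) (hy₂ : 0 < y₂) :
    ∫ x₁ : ℝ, d2H α (x₁, y₂)
      = 1 / 2 - (1 / 2) * Real.exp (-y₂ / Real.sqrt α) := by
  have hscale : y₂.toNNReal ≠ 0 := (toNNReal_pos.2 hy₂).ne'
  calc ∫ x₁, d2H α (x₁, y₂)
      = ∫ x₁, (α * d2G α (x₁, y₂) + 1 / 2 * cauchyPDFReal 0 y₂.toNNReal x₁) := by
        simp only [d2H_eq_d2G_add_cauchyPDFReal hα _ hy₂]
    _ = α * (∫ x₁, d2G α (x₁, y₂)) + 1 / 2 * ∫ x₁, cauchyPDFReal 0 y₂.toNNReal x₁ := by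
        rw [integral_add ((integrable_d2G hα hy₂).const_mul α)
          ((integrable_cauchyPDFReal 0).const_mul _), integral_const_mul, integral_const_mul]
    _ = 1 / 2 - 1 / 2 * exp (-y₂ / √α) := by
        rw [integral_d2G hα hy₂, integral_cauchyPDFReal_eq_one 0 hscale]
        field_simp
        ring
end

section
/- Let $\varphi \in C_c^\infty(\mathbb{H})$ be supported in $\{x_2 > \varepsilon\}$, and for $\alpha > 0$ let $H^\alpha_\varphi$ be defined as $H_\varphi$ but with $K$ replaced by $K_\alpha = K * G_\alpha$. Then for every $\theta > 0$, $H^\alpha_\varphi \to H_\varphi$ uniformly on the set $\{(x,y) \in \mathbb{H}\times\mathbb{H} : |x-y| > \theta\}$ as $\alpha \to 0$; more precisely $|H^\alpha_\varphi(x,y) - H_\varphi(x,y)| \leq C\sqrt{\alpha}\left(\frac{\|\nabla^2\varphi\|_{L^\infty}}{\theta} + \frac{\|\nabla\varphi\|_{L^\infty}}{\varepsilon^2}\right)$ on that set. -/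
open MeasureTheory Real

/-- Dot product on `ℝ × ℝ`. -/
def dotp (u v : ℝ × ℝ) : ℝ := u.1 * v.1 + u.2 * v.2

/-- The gradient of a scalar function on `ℝ × ℝ`. -/
noncomputable def grad (φ : ℝ × ℝ → ℝ) (x : ℝ × ℝ) : ℝ × ℝ :=
  (fderiv ℝ φ x (1, 0), fderiv ℝ φ x (0, 1))

/-- Reflection `ȳ = (y₁, -y₂)`. -/
def reflHP (y : ℝ × ℝ) : ℝ × ℝ := (y.1, -y.2)

/-- The symmetrized auxiliary test function `H_φ` built from a kernel `k`. -/
noncomputable def HphiK (k : ℝ × ℝ → ℝ × ℝ) (φ : ℝ × ℝ → ℝ) (x y : ℝ × ℝ) : ℝ :=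
  (1/2) * dotp (k (x - y)) (grad φ x - grad φ y)
    - (1/2) * dotp (k (x - reflHP y)) (grad φ x)
    - (1/2) * dotp (k (y - reflHP x)) (grad φ y)

/-- Sup norm of the gradient. -/
noncomputable def grad1norm (φ : ℝ × ℝ → ℝ) : ℝ := ⨆ x : ℝ × ℝ, ‖fderiv ℝ φ x‖

/-- Sup norm of the second derivative. -/
noncomputable def grad2norm (φ : ℝ × ℝ → ℝ) : ℝ := ⨆ x : ℝ × ℝ, ‖fderiv ℝ (fderiv ℝ φ) x‖

/-!
The planar kernel is inversion up to a reflection and a rotation, so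
`|K(a) - K(b)| = |a - b| / (2π |a| |b|)`. Since `|z| ≤ |z - y| + |y|`, this gives
`|K(z - y) - K(z)| ≤ (|y| + |y|² / |z - y|) / (2π |z|²)`, which is integrated against `G_α`.
The moments of `G_α` scale as `∫ |y|^q G_α = c_q α^(q/2)`, so the first term contributes `O(√α)`.
In the second, `|y|² G_α` has mass `4α` and is bounded by `1/π`, so cutting the singularity
`1/|z - y|` at distance `√α` gives `O(√α)` again, whence `|K_α - K| ≤ C √α / |z|²`.

`H` is linear in the kernel: the factor `∇φ(x) - ∇φ(y)` cancels one power of `|x - y|`, and in the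
reflected terms `|x - ȳ| ≥ ε` whenever `∇φ(x) ≠ 0`.
-/

/-- The Euclidean length on `ℝ × ℝ`, whose instance norm is the sup norm. Going through `ℂ` gives
access to complex inversion and to polar coordinates. -/
noncomputable def euclNorm (x : ℝ × ℝ) : ℝ := ‖Complex.equivRealProdCLM.symm x‖

lemma euclNorm_eq_sqrt (x : ℝ × ℝ) : euclNorm x = √(x.1 ^ 2 + x.2 ^ 2) := by
  rw [euclNorm, Complex.equivRealProdCLM_symm_apply, Complex.norm_add_mul_I]

lemma sq_euclNorm (x : ℝ × ℝ) : euclNorm x ^ 2 = x.1 ^ 2 + x.2 ^ 2 := by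
  rw [euclNorm_eq_sqrt, sq_sqrt (by positivity)]

lemma euclNorm_nonneg (x : ℝ × ℝ) : 0 ≤ euclNorm x := norm_nonneg _

lemma euclNorm_pos {x : ℝ × ℝ} (hx : x ≠ 0) : 0 < euclNorm x := by simpa [euclNorm] using hx

lemma euclNorm_le_add (z y : ℝ × ℝ) : euclNorm z ≤ euclNorm (z - y) + euclNorm y := by
  simpa [euclNorm] using norm_le_norm_sub_add (Complex.equivRealProdCLM.symm z)
    (Complex.equivRealProdCLM.symm y)

lemma norm_le_euclNorm (x : ℝ × ℝ) : ‖x‖ ≤ euclNorm x := by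
  rw [euclNorm_eq_sqrt]
  exact max_le (abs_le_sqrt (by nlinarith [sq_nonneg x.2]))
    (abs_le_sqrt (by nlinarith [sq_nonneg x.1]))

@[fun_prop]
lemma continuous_euclNorm : Continuous euclNorm := by
  unfold euclNorm
  fun_prop

lemma integral_comp_euclNorm {F : Type*} [NormedAddCommGroup F] [NormedSpace ℝ F] (f : ℝ → F) :
    ∫ x, f (euclNorm x) = (2 * π) • ∫ r in Set.Ioi 0, r • f r := by
  have to_complex : ∫ x, f (euclNorm x) = ∫ w : ℂ, f ‖w‖ :=
    Complex.volume_preserving_equiv_real_prod.symm.integral_comp' fun w : ℂ => f ‖w‖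
  have volume_ball : (volume : Measure ℂ).real (Metric.ball 0 1) = π := by
    simp [Measure.real, Complex.volume_ball]
  rw [to_complex, integral_fun_norm_addHaar, Complex.finrank_real_complex, volume_ball]
  simp [mul_smul, ofNat_smul_eq_nsmul]

lemma integral_indicator_inv_euclNorm {s : ℝ} (hs : 0 < s) :
    ∫ x, (Set.Iio s).indicator (·⁻¹) (euclNorm x) = 2 * π * s := by
  have radial : ∀ r ∈ Set.Ioi (0 : ℝ),
      r • (Set.Iio s).indicator (·⁻¹) r = (Set.Iio s).indicator (fun _ => 1) r := by
    intro r (hr : 0 < r)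
    by_cases h : r ∈ Set.Iio s <;> simp [h, hr.ne']
  rw [integral_comp_euclNorm, setIntegral_congr_fun measurableSet_Ioi radial,
    setIntegral_indicator measurableSet_Iio, Set.Ioi_inter_Iio]
  simp [hs.le]

lemma integrable_indicator_inv_euclNorm {s : ℝ} (hs : 0 < s) :
    Integrable fun x => (Set.Iio s).indicator (·⁻¹) (euclNorm x) :=
  .of_integral_ne_zero <| by rw [integral_indicator_inv_euclNorm hs]; positivity

section SingularIntegral

variable {g : ℝ × ℝ → ℝ} {M : ℝ}

lemma div_le_mul_indicator_inv_add {a r s : ℝ} (ha : 0 ≤ a) (haM : a ≤ M) (hr : 0 ≤ r)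
    (hs : 0 < s) : a / r ≤ M * (Set.Iio s).indicator (·⁻¹) r + s⁻¹ * a := by
  rcases lt_or_ge r s with hrs | hsr
  · rw [Set.indicator_of_mem (Set.mem_Iio.2 hrs), div_eq_mul_inv]
    exact le_add_of_le_of_nonneg (by gcongr) (by positivity)
  · rw [Set.indicator_of_notMem (Set.notMem_Iio.2 hsr), mul_zero, zero_add, inv_mul_eq_div]
    gcongr

lemma integrable_div_euclNorm_sub (hg : Integrable g) (hg0 : ∀ y, 0 ≤ g y) (hgM : ∀ y, g y ≤ M)
    (z : ℝ × ℝ) : Integrable fun y => g y / euclNorm (z - y) := by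
  have majorant := (((integrable_indicator_inv_euclNorm one_pos).comp_sub_left z).const_mul M).add
    (hg.const_mul 1⁻¹)
  refine majorant.mono' (hg.aestronglyMeasurable.div₀ (by fun_prop)) (.of_forall fun y => ?_)
  rw [norm_of_nonneg (div_nonneg (hg0 y) (euclNorm_nonneg _))]
  exact div_le_mul_indicator_inv_add (hg0 y) (hgM y) (euclNorm_nonneg _) one_pos

lemma integral_div_euclNorm_sub_le (hg : Integrable g) (hg0 : ∀ y, 0 ≤ g y) (hgM : ∀ y, g y ≤ M)
    (z : ℝ × ℝ) {s : ℝ} (hs : 0 < s) :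
    ∫ y, g y / euclNorm (z - y) ≤ M * (2 * π * s) + s⁻¹ * ∫ y, g y := by
  have near := ((integrable_indicator_inv_euclNorm hs).comp_sub_left z).const_mul M
  have far := hg.const_mul s⁻¹
  calc ∫ y, g y / euclNorm (z - y)
      ≤ ∫ y, (M * (Set.Iio s).indicator (·⁻¹) (euclNorm (z - y)) + s⁻¹ * g y) :=
        integral_mono (integrable_div_euclNorm_sub hg hg0 hgM z) (near.add far) fun y =>
          div_le_mul_indicator_inv_add (hg0 y) (hgM y) (euclNorm_nonneg _) hs
    _ = M * (2 * π * s) + s⁻¹ * ∫ y, g y := by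
        rw [integral_add near far, integral_const_mul, integral_const_mul,
          integral_sub_left_eq_self (fun x => (Set.Iio s).indicator (·⁻¹) (euclNorm x)),
          integral_indicator_inv_euclNorm hs]

end SingularIntegral

section Mollification

variable {F : Type*} [NormedAddCommGroup F] {k : ℝ × ℝ → F} {A : ℝ}

lemma norm_shift_sub_le (hA : 0 ≤ A)
    (hk : ∀ a b, a ≠ 0 → b ≠ 0 → ‖k a - k b‖ ≤ A * (euclNorm (a - b) / (euclNorm a * euclNorm b)))
    {y z : ℝ × ℝ} (hz : z ≠ 0) (hyz : y ≠ z) :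
    ‖k (z - y) - k z‖ ≤ A / euclNorm z ^ 2 * (euclNorm y + euclNorm y ^ 2 / euclNorm (z - y)) := by
  have hzy : z - y ≠ 0 := sub_ne_zero.2 hyz.symm
  have z_pos := euclNorm_pos hz
  have zy_pos := euclNorm_pos hzy
  have y_nonneg := euclNorm_nonneg y
  have symm : euclNorm (z - y - z) = euclNorm y := by simp [euclNorm]
  calc ‖k (z - y) - k z‖ ≤ A * (euclNorm y / (euclNorm (z - y) * euclNorm z)) :=
        symm ▸ hk _ _ hzy hz
    _ = A / euclNorm z ^ 2 * (euclNorm z * euclNorm y / euclNorm (z - y)) := by field_simp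
    _ ≤ A / euclNorm z ^ 2 * ((euclNorm (z - y) + euclNorm y) * euclNorm y / euclNorm (z - y)) := by
        gcongr
        exact euclNorm_le_add z y
    _ = A / euclNorm z ^ 2 * (euclNorm y + euclNorm y ^ 2 / euclNorm (z - y)) := by field_simp

variable [NormedSpace ℝ F] [CompleteSpace F]

lemma integral_smul_sub_eq {X : Type*} [MeasurableSpace X] {μ : Measure X} {G : X → ℝ} {f : X → F}
    {c : F} (hG1 : ∫ x, G x ∂μ = 1) (hf : Integrable (fun x => G x • (f x - c)) μ) :
    (∫ x, G x • f x ∂μ) - c = ∫ x, G x • (f x - c) ∂μ := by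
  have split (x : X) : G x • f x = G x • (f x - c) + G x • c := by
    rw [← smul_add, sub_add_cancel]
  simp_rw [split]
  rw [integral_add hf ((integrable_of_integral_eq_one hG1).smul_const c), integral_smul_const,
    hG1, one_smul, add_sub_cancel_right]

variable {G : ℝ × ℝ → ℝ} {M : ℝ}

lemma norm_integral_smul_sub_le (hA : 0 ≤ A) (hkm : StronglyMeasurable k)
    (hk : ∀ a b, a ≠ 0 → b ≠ 0 → ‖k a - k b‖ ≤ A * (euclNorm (a - b) / (euclNorm a * euclNorm b)))
    (hG0 : ∀ y, 0 ≤ G y) (hG1 : ∫ y, G y = 1) (hG₁ : Integrable fun y => euclNorm y * G y)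
    (hG₂ : Integrable fun y => euclNorm y ^ 2 * G y) (hGM : ∀ y, euclNorm y ^ 2 * G y ≤ M)
    {z : ℝ × ℝ} (hz : z ≠ 0) {s : ℝ} (hs : 0 < s) :
    ‖(∫ y, G y • k (z - y)) - k z‖ ≤ A / euclNorm z ^ 2 *
      ((∫ y, euclNorm y * G y) + (M * (2 * π * s) + s⁻¹ * ∫ y, euclNorm y ^ 2 * G y)) := by
  have hG : Integrable G := integrable_of_integral_eq_one hG1
  have second_nonneg (y : ℝ × ℝ) : 0 ≤ euclNorm y ^ 2 * G y := mul_nonneg (sq_nonneg _) (hG0 y)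
  have singular := integrable_div_euclNorm_sub hG₂ second_nonneg hGM z
  have majorant := (hG₁.add singular).const_mul (A / euclNorm z ^ 2)
  simp only [Pi.add_apply] at majorant
  have pointwise : ∀ᵐ y, ‖G y • (k (z - y) - k z)‖ ≤ A / euclNorm z ^ 2 *
      (euclNorm y * G y + euclNorm y ^ 2 * G y / euclNorm (z - y)) := by
    filter_upwards [Measure.ae_ne volume z] with y hy
    rw [norm_smul, norm_of_nonneg (hG0 y)]
    calc G y * ‖k (z - y) - k z‖ ≤ G y * (A / euclNorm z ^ 2 *
          (euclNorm y + euclNorm y ^ 2 / euclNorm (z - y))) :=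
          mul_le_mul_of_nonneg_left (norm_shift_sub_le hA hk hz hy) (hG0 y)
      _ = _ := by ring
  have shift_integrable : Integrable fun y => G y • (k (z - y) - k z) := by
    refine majorant.mono' (hG.aestronglyMeasurable.smul ?_) pointwise
    exact ((hkm.comp_measurable (by fun_prop)).sub stronglyMeasurable_const).aestronglyMeasurable
  rw [integral_smul_sub_eq hG1 shift_integrable]
  refine (norm_integral_le_of_norm_le majorant pointwise).trans ?_
  rw [integral_const_mul, integral_add hG₁ singular]
  gcongr
  exact integral_div_euclNorm_sub_le hG₂ second_nonneg hGM z hs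

end Mollification

section Bessel

lemma integral_rpow_euclNorm_mul_exp_neg {q b : ℝ} (hq : -2 < q) (hb : 0 < b) :
    ∫ y, euclNorm y ^ q * rexp (-b * euclNorm y ^ 2) =
      π * (1 / b) ^ (q / 2 + 1) * Gamma (q / 2 + 1) := by
  have radial : ∀ r ∈ Set.Ioi (0 : ℝ),
      r • (r ^ q * rexp (-b * r ^ 2)) = r ^ (q + 1) * rexp (-b * r ^ (2 : ℝ)) := by
    intro r (hr : 0 < r)
    rw [smul_eq_mul, rpow_add_one hr.ne', rpow_two]
    ring
  rw [integral_comp_euclNorm fun r => r ^ q * rexp (-b * r ^ 2),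
    setIntegral_congr_fun measurableSet_Ioi radial,
    integral_rpow_mul_exp_neg_mul_rpow two_pos (by linarith) hb,
    show -(q + 1 + 1) / 2 = -(q / 2 + 1) by ring, show (q + 1 + 1) / 2 = q / 2 + 1 by ring,
    rpow_neg hb.le, one_div b, inv_rpow hb.le, smul_eq_mul]
  ring

variable {α : ℝ}

lemma besselG_eq (α : ℝ) (y : ℝ × ℝ) : besselG α y = (4 * π * α)⁻¹ *
    ∫ t in Set.Ioi 0, t⁻¹ * rexp (-(1 / (4 * π) * t)) * rexp (-(π / (t * α)) * euclNorm y ^ 2) := by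
  rw [besselG, sq_euclNorm, one_div]
  congr with t
  rw [one_div, mul_right_comm]
  ring_nf

lemma besselG_nonneg (hα : 0 ≤ α) (y : ℝ × ℝ) : 0 ≤ besselG α y := by
  rw [besselG_eq]
  refine mul_nonneg (by positivity) (setIntegral_nonneg measurableSet_Ioi fun t ht => ?_)
  have : 0 < t := ht
  positivity

/-- The integrand of `|y|^q G_α(y)`, up to the factor `1/(4πα)`, in the representation of `G_α` as
a superposition of Gaussians of variance proportional to `t`. -/
noncomputable def besselMomentIntegrand (q α : ℝ) (y : ℝ × ℝ) (t : ℝ) : ℝ :=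
  t⁻¹ * rexp (-(1 / (4 * π) * t)) * (euclNorm y ^ q * rexp (-(π / (t * α)) * euclNorm y ^ 2))

lemma rpow_euclNorm_mul_besselG (q α : ℝ) (y : ℝ × ℝ) : euclNorm y ^ q * besselG α y =
    (4 * π * α)⁻¹ * ∫ t in Set.Ioi 0, besselMomentIntegrand q α y t := by
  rw [besselG_eq, mul_left_comm, ← integral_const_mul]
  simp only [besselMomentIntegrand, mul_left_comm]

lemma integral_besselMomentIntegrand_left {q t : ℝ} (hq : -2 < q) (hα : 0 < α) (ht : 0 < t) :
    ∫ y, besselMomentIntegrand q α y t = π * (α / π) ^ (q / 2 + 1) * Gamma (q / 2 + 1) *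
      (t ^ (q / 2 + 1 - 1) * rexp (-(1 / (4 * π) * t))) := by
  simp only [besselMomentIntegrand]
  rw [integral_const_mul, integral_rpow_euclNorm_mul_exp_neg hq (by positivity), one_div_div,
    mul_div_assoc, mul_rpow ht.le (by positivity), rpow_sub_one ht.ne']
  ring

lemma integral_rpow_mul_exp_neg_quarter {a : ℝ} (ha : 0 < a) :
    ∫ t in Set.Ioi (0 : ℝ), t ^ (a - 1) * rexp (-(1 / (4 * π) * t)) = (4 * π) ^ a * Gamma a := by
  rw [integral_rpow_mul_exp_neg_mul_Ioi ha (by positivity), one_div_one_div]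

lemma integrable_besselMomentIntegrand {q : ℝ} (hq : -2 < q) (hα : 0 < α) :
    Integrable (Function.uncurry (besselMomentIntegrand q α))
      (volume.prod (volume.restrict (Set.Ioi 0))) := by
  have exponent_pos : 0 < q / 2 + 1 := by linarith
  have measurable : Measurable (Function.uncurry (besselMomentIntegrand q α)) := by
    unfold besselMomentIntegrand Function.uncurry
    fun_prop
  rw [integrable_prod_iff' measurable.aestronglyMeasurable]
  constructor
  · filter_upwards [ae_restrict_mem measurableSet_Ioi] with t (ht : 0 < t)
    refine .of_integral_ne_zero (ne_of_gt ?_)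
    simp only [Function.uncurry_apply_pair]
    rw [integral_besselMomentIntegrand_left hq hα ht]
    positivity
  · have marginal_integrable := (Integrable.of_integral_ne_zero (by
      rw [integral_rpow_mul_exp_neg_quarter exponent_pos]; positivity)).const_mul
        (π * (α / π) ^ (q / 2 + 1) * Gamma (q / 2 + 1))
    refine marginal_integrable.congr ?_
    filter_upwards [ae_restrict_mem measurableSet_Ioi] with t (ht : 0 < t)
    rw [← integral_besselMomentIntegrand_left hq hα ht]
    congr with y
    have := euclNorm_nonneg y
    rw [Function.uncurry_apply_pair, besselMomentIntegrand, norm_of_nonneg (by positivity)]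

lemma integral_rpow_euclNorm_mul_besselG {q : ℝ} (hq : -2 < q) (hα : 0 < α) :
    ∫ y, euclNorm y ^ q * besselG α y = (4 * α) ^ (q / 2) * Gamma (q / 2 + 1) ^ 2 := by
  simp_rw [rpow_euclNorm_mul_besselG]
  rw [integral_const_mul, integral_integral_swap (integrable_besselMomentIntegrand hq hα),
    setIntegral_congr_fun measurableSet_Ioi
      fun t ht => integral_besselMomentIntegrand_left hq hα ht,
    integral_const_mul, integral_rpow_mul_exp_neg_quarter (by linarith)]
  calc (4 * π * α)⁻¹ * (π * (α / π) ^ (q / 2 + 1) * Gamma (q / 2 + 1) *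
        ((4 * π) ^ (q / 2 + 1) * Gamma (q / 2 + 1)))
      = (4 * α)⁻¹ * ((α / π) ^ (q / 2 + 1) * (4 * π) ^ (q / 2 + 1)) * Gamma (q / 2 + 1) ^ 2 := by
        field_simp
    _ = (4 * α)⁻¹ * (4 * α) ^ (q / 2 + 1) * Gamma (q / 2 + 1) ^ 2 := by
        rw [← mul_rpow (by positivity) (by positivity), show α / π * (4 * π) = 4 * α by field_simp]
    _ = (4 * α) ^ (q / 2) * Gamma (q / 2 + 1) ^ 2 := by
        rw [rpow_add_one (by positivity)]
        field_simp

lemma integral_besselG (hα : 0 < α) : ∫ y, besselG α y = 1 := by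
  simpa using integral_rpow_euclNorm_mul_besselG (q := 0) (by norm_num) hα

lemma integral_euclNorm_mul_besselG (hα : 0 < α) : ∫ y, euclNorm y * besselG α y = π / 2 * √α := by
  have moment := integral_rpow_euclNorm_mul_besselG (q := 1) (by norm_num) hα
  have sqrt_four : √4 = (2 : ℝ) := by rw [sqrt_eq_iff_mul_self_eq] <;> norm_num
  rw [Gamma_add_one (by norm_num), Gamma_one_half_eq, ← sqrt_eq_rpow, sqrt_mul (by norm_num),
    sqrt_four, mul_pow, sq_sqrt pi_nonneg] at moment
  simp only [rpow_one] at moment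
  rw [moment]
  ring

lemma integral_sq_euclNorm_mul_besselG (hα : 0 < α) :
    ∫ y, euclNorm y ^ 2 * besselG α y = 4 * α := by
  have moment := integral_rpow_euclNorm_mul_besselG (q := 2) (by norm_num) hα
  simpa [one_add_one_eq_two] using moment

lemma mul_exp_neg_mul_le_inv {b : ℝ} (hb : 0 < b) (r : ℝ) : r * rexp (-b * r) ≤ b⁻¹ := by
  have peak : b * r * rexp (-(b * r)) ≤ 1 :=
    (mul_exp_neg_le_exp_neg_one _).trans (exp_le_one_iff.2 (by norm_num))
  rw [← one_div, le_div_iff₀' hb, neg_mul]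
  exact (mul_assoc _ _ _).ge.trans peak

lemma sq_euclNorm_mul_besselG_le (hα : 0 < α) (y : ℝ × ℝ) :
    euclNorm y ^ 2 * besselG α y ≤ 1 / π := by
  have exp_integrable : IntegrableOn (fun t => α / π * rexp (-(1 / (4 * π)) * t)) (Set.Ioi 0) :=
    (integrableOn_exp_mul_Ioi (by simp [pi_pos]) 0).const_mul _
  have integrand_le : ∀ᵐ t ∂volume.restrict (Set.Ioi 0),
      besselMomentIntegrand 2 α y t ≤ α / π * rexp (-(1 / (4 * π)) * t) := by
    filter_upwards [ae_restrict_mem measurableSet_Ioi] with t (ht : 0 < t)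
    rw [besselMomentIntegrand, rpow_two]
    calc t⁻¹ * rexp (-(1 / (4 * π) * t)) * (euclNorm y ^ 2 * rexp (-(π / (t * α)) * euclNorm y ^ 2))
        ≤ t⁻¹ * rexp (-(1 / (4 * π) * t)) * (π / (t * α))⁻¹ := by
          gcongr
          exact mul_exp_neg_mul_le_inv (by positivity) _
      _ = α / π * rexp (-(1 / (4 * π)) * t) := by
          rw [neg_mul]
          field_simp
  have integrand_nonneg : ∀ᵐ t ∂volume.restrict (Set.Ioi 0),
      0 ≤ besselMomentIntegrand 2 α y t := by
    filter_upwards [ae_restrict_mem measurableSet_Ioi] with t (ht : 0 < t)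
    rw [besselMomentIntegrand, rpow_two]
    positivity
  rw [← rpow_two, rpow_euclNorm_mul_besselG]
  calc (4 * π * α)⁻¹ * ∫ t in Set.Ioi 0, besselMomentIntegrand 2 α y t
      ≤ (4 * π * α)⁻¹ * ∫ t in Set.Ioi 0, α / π * rexp (-(1 / (4 * π)) * t) :=
        mul_le_mul_of_nonneg_left
          (integral_mono_of_nonneg integrand_nonneg exp_integrable integrand_le) (by positivity)
    _ = 1 / π := by
        rw [integral_const_mul, integral_exp_mul_Ioi (by simp [pi_pos]), mul_zero, exp_zero]
        field_simp

variable {F : Type*} [NormedAddCommGroup F] [NormedSpace ℝ F] [CompleteSpace F]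

lemma norm_integral_besselG_smul_sub_le {k : ℝ × ℝ → F} {A : ℝ} (hA : 0 ≤ A)
    (hkm : StronglyMeasurable k)
    (hk : ∀ a b, a ≠ 0 → b ≠ 0 → ‖k a - k b‖ ≤ A * (euclNorm (a - b) / (euclNorm a * euclNorm b)))
    (hα : 0 < α) {z : ℝ × ℝ} (hz : z ≠ 0) :
    ‖(∫ y, besselG α y • k (z - y)) - k z‖ ≤ A * (π / 2 + 6) * √α / euclNorm z ^ 2 := by
  have first := integral_euclNorm_mul_besselG hα
  have second := integral_sq_euclNorm_mul_besselG hα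
  have mollified := norm_integral_smul_sub_le hA hkm hk (besselG_nonneg hα.le)
    (integral_besselG hα) (.of_integral_ne_zero (by rw [first]; positivity))
    (.of_integral_ne_zero (by rw [second]; positivity)) (sq_euclNorm_mul_besselG_le hα) hz
    (sqrt_pos.2 hα)
  refine mollified.trans_eq ?_
  have inv_sqrt_mul : (√α)⁻¹ * (4 * α) = 4 * √α := by
    rw [mul_left_comm, inv_mul_eq_div, div_sqrt]
  rw [first, second, inv_sqrt_mul]
  field_simp
  ring

end Bessel

section BiotSavart

lemma equivRealProdCLM_symm_BSK (x : ℝ × ℝ) : Complex.equivRealProdCLM.symm (BSK x) =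
    (2 * π)⁻¹ • (Complex.I * (starRingEnd ℂ) (Complex.equivRealProdCLM.symm x)⁻¹) := by
  apply Complex.ext
  · simp only [BSK, div_eq_mul_inv, mul_inv, Complex.smul_re, Complex.I_mul_re, Complex.conj_im,
      Complex.inv_im, Complex.normSq_apply, Complex.equivRealProdCLM_symm_apply_re,
      Complex.equivRealProdCLM_symm_apply_im, smul_eq_mul]
    ring
  · simp only [BSK, div_eq_mul_inv, mul_inv, Complex.smul_im, Complex.I_mul_im, Complex.conj_re,
      Complex.inv_re, Complex.normSq_apply, Complex.equivRealProdCLM_symm_apply_re,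
      Complex.equivRealProdCLM_symm_apply_im, smul_eq_mul]
    ring

lemma euclNorm_BSK_sub {a b : ℝ × ℝ} (ha : a ≠ 0) (hb : b ≠ 0) :
    euclNorm (BSK a - BSK b) = (2 * π)⁻¹ * (euclNorm (a - b) / (euclNorm a * euclNorm b)) := by
  have inv_sub := dist_inv_inv₀ (z := Complex.equivRealProdCLM.symm a)
    (w := Complex.equivRealProdCLM.symm b) (by simpa using ha) (by simpa using hb)
  rw [dist_eq_norm, dist_eq_norm] at inv_sub
  simp only [euclNorm, map_sub]
  rw [equivRealProdCLM_symm_BSK, equivRealProdCLM_symm_BSK, ← smul_sub, ← mul_sub, ← map_sub,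
    norm_smul, norm_mul, Complex.norm_I, one_mul, RCLike.norm_conj, inv_sub,
    norm_of_nonneg (by positivity)]

lemma norm_BSK_sub_le {a b : ℝ × ℝ} (ha : a ≠ 0) (hb : b ≠ 0) :
    ‖BSK a - BSK b‖ ≤ (2 * π)⁻¹ * (euclNorm (a - b) / (euclNorm a * euclNorm b)) :=
  (norm_le_euclNorm _).trans_eq (euclNorm_BSK_sub ha hb)

lemma norm_BSKα_sub_BSK_le {α : ℝ} (hα : 0 < α) {z : ℝ × ℝ} (hz : z ≠ 0) :
    ‖BSKα α z - BSK z‖ ≤ 5 / 4 * √α / euclNorm z ^ 2 := by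
  have component (k : ℝ × ℝ → ℝ) (hkm : Measurable k)
      (hk : ∀ a b, ‖k a - k b‖ ≤ ‖BSK a - BSK b‖) :
      ‖(∫ y, k (z - y) * besselG α y) - k z‖ ≤ 5 / 4 * √α / euclNorm z ^ 2 := by
    have constant : (2 * π)⁻¹ * (π / 2 + 6) ≤ 5 / 4 := by
      rw [inv_mul_le_iff₀ (by positivity)]
      linarith [pi_gt_three]
    simp_rw [mul_comm (k _)]
    refine (norm_integral_besselG_smul_sub_le (by positivity) hkm.stronglyMeasurable
      (fun a b ha hb => (hk a b).trans (norm_BSK_sub_le ha hb)) hα hz).trans ?_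
    gcongr
  exact max_le (component (fun x => (BSK x).1) (by fun_prop) fun a b => norm_fst_le (BSK a - BSK b))
    (component (fun x => (BSK x).2) (by fun_prop) fun a b => norm_snd_le (BSK a - BSK b))

end BiotSavart

section TestFunction

lemma HphiK_sub (k l : ℝ × ℝ → ℝ × ℝ) (φ : ℝ × ℝ → ℝ) (x y : ℝ × ℝ) :
    HphiK k φ x y - HphiK l φ x y = HphiK (k - l) φ x y := by
  simp only [HphiK, dotp, Pi.sub_apply, Prod.fst_sub, Prod.snd_sub]
  ring

lemma dotp_grad (u : ℝ × ℝ) (φ : ℝ × ℝ → ℝ) (x : ℝ × ℝ) : dotp u (grad φ x) = fderiv ℝ φ x u := by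
  have expand : u = u.1 • (1, 0) + u.2 • (0, 1) := by ext <;> simp
  conv_rhs => rw [expand, map_add, map_smul, map_smul]
  rfl

lemma HphiK_eq_fderiv (k : ℝ × ℝ → ℝ × ℝ) (φ : ℝ × ℝ → ℝ) (x y : ℝ × ℝ) :
    HphiK k φ x y = 1 / 2 * (fderiv ℝ φ x - fderiv ℝ φ y) (k (x - y))
      - 1 / 2 * fderiv ℝ φ x (k (x - reflHP y)) - 1 / 2 * fderiv ℝ φ y (k (y - reflHP x)) := by
  have dotp_sub (u v w : ℝ × ℝ) : dotp u (v - w) = dotp u v - dotp u w := by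
    simp only [dotp, Prod.fst_sub, Prod.snd_sub]
    ring
  rw [HphiK, dotp_sub, dotp_grad, dotp_grad, dotp_grad, dotp_grad, sub_apply]

lemma abs_HphiK_le (k : ℝ × ℝ → ℝ × ℝ) (φ : ℝ × ℝ → ℝ) (x y : ℝ × ℝ) :
    |HphiK k φ x y| ≤ 1 / 2 * (‖fderiv ℝ φ x - fderiv ℝ φ y‖ * ‖k (x - y)‖)
      + 1 / 2 * (‖fderiv ℝ φ x‖ * ‖k (x - reflHP y)‖)
      + 1 / 2 * (‖fderiv ℝ φ y‖ * ‖k (y - reflHP x)‖) := by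
  rw [HphiK_eq_fderiv]
  have half_apply_le (T : ℝ × ℝ →L[ℝ] ℝ) (u : ℝ × ℝ) : |1 / 2 * T u| ≤ 1 / 2 * (‖T‖ * ‖u‖) := by
    rw [abs_mul, abs_of_pos one_half_pos]
    exact mul_le_mul_of_nonneg_left (T.le_opNorm u) one_half_pos.le
  exact (abs_sub _ _).trans (add_le_add ((abs_sub _ _).trans
    (add_le_add (half_apply_le _ _) (half_apply_le _ _))) (half_apply_le _ _))

variable {k : ℝ × ℝ → ℝ × ℝ} {φ : ℝ × ℝ → ℝ} {B ε L₁ L₂ θ : ℝ} {x y : ℝ × ℝ}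

lemma le_snd_of_fderiv_ne_zero (hφ : Function.support φ ⊆ {x | ε < x.2})
    (hx : fderiv ℝ φ x ≠ 0) : ε ≤ x.2 :=
  closure_minimal (hφ.trans fun z (hz : ε < z.2) => hz.le)
    (isClosed_le continuous_const continuous_snd) (support_fderiv_subset ℝ hx)

lemma norm_fderiv_mul_norm_reflected_le (hB : 0 ≤ B) (hk : ∀ z ≠ 0, ‖k z‖ ≤ B / euclNorm z ^ 2)
    (hε : 0 < ε) (hφ : Function.support φ ⊆ {x | ε < x.2}) (hL₁ : ∀ x, ‖fderiv ℝ φ x‖ ≤ L₁)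
    (x : ℝ × ℝ) (hy : 0 ≤ y.2) : ‖fderiv ℝ φ x‖ * ‖k (x - reflHP y)‖ ≤ B * (L₁ / ε ^ 2) := by
  have L₁_nonneg : 0 ≤ L₁ := (norm_nonneg _).trans (hL₁ x)
  rcases eq_or_ne (fderiv ℝ φ x) 0 with hx | hx
  · rw [hx, norm_zero, zero_mul]
    positivity
  have separated : ε ≤ euclNorm (x - reflHP y) := calc
    ε ≤ x.2 + y.2 := le_add_of_le_of_nonneg (le_snd_of_fderiv_ne_zero hφ hx) hy
    _ = (x - reflHP y).2 := by simp [reflHP]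
    _ ≤ ‖x - reflHP y‖ := (le_abs_self _).trans (norm_snd_le (x - reflHP y))
    _ ≤ euclNorm (x - reflHP y) := norm_le_euclNorm _
  have ne_zero : x - reflHP y ≠ 0 := fun h => by
    simp only [h, euclNorm, map_zero, norm_zero] at separated
    exact separated.not_gt hε
  calc ‖fderiv ℝ φ x‖ * ‖k (x - reflHP y)‖ ≤ L₁ * (B / ε ^ 2) := by
        gcongr
        · exact hL₁ x
        · exact (hk _ ne_zero).trans (by gcongr)
    _ = B * (L₁ / ε ^ 2) := by ring

lemma abs_HphiK_le_of_norm_le_div_sq (hB : 0 ≤ B) (hk : ∀ z ≠ 0, ‖k z‖ ≤ B / euclNorm z ^ 2)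
    (hε : 0 < ε) (hφ : Function.support φ ⊆ {x | ε < x.2}) (hL₁ : ∀ x, ‖fderiv ℝ φ x‖ ≤ L₁)
    (hL₂ : ∀ x y, ‖fderiv ℝ φ x - fderiv ℝ φ y‖ ≤ L₂ * euclNorm (x - y)) (hθ : 0 < θ)
    (hx : 0 ≤ x.2) (hy : 0 ≤ y.2) (hxy : θ ≤ euclNorm (x - y)) :
    |HphiK k φ x y| ≤ B * (L₂ / θ + L₁ / ε ^ 2) := by
  have dist_pos : 0 < euclNorm (x - y) := hθ.trans_le hxy
  have ne_zero : x - y ≠ 0 := fun h => by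
    simp [h, euclNorm] at dist_pos
  have L₂_nonneg : 0 ≤ L₂ :=
    nonneg_of_mul_nonneg_left ((norm_nonneg _).trans (hL₂ x y)) dist_pos
  have direct : ‖fderiv ℝ φ x - fderiv ℝ φ y‖ * ‖k (x - y)‖ ≤ B * (L₂ / θ) := calc
    _ ≤ L₂ * euclNorm (x - y) * (B / euclNorm (x - y) ^ 2) := by
        gcongr
        · exact hL₂ x y
        · exact hk _ ne_zero
    _ = B * (L₂ / euclNorm (x - y)) := by field_simp
    _ ≤ B * (L₂ / θ) := by gcongr
  have reflected_y := norm_fderiv_mul_norm_reflected_le hB hk hε hφ hL₁ x hy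
  have reflected_x := norm_fderiv_mul_norm_reflected_le hB hk hε hφ hL₁ y hx
  have : 0 ≤ B * (L₂ / θ) := by positivity
  linarith [abs_HphiK_le k φ x y]

lemma bddAbove_range_norm_fderiv {E F : Type*} [NormedAddCommGroup E] [NormedSpace ℝ E]
    [NormedAddCommGroup F] [NormedSpace ℝ F] {f : E → F} (hf : ContDiff ℝ 1 f)
    (hc : HasCompactSupport f) : BddAbove (Set.range fun x => ‖fderiv ℝ f x‖) :=
  (hf.continuous_fderiv one_ne_zero).norm.bddAbove_range_of_hasCompactSupport (hc.fderiv ℝ).norm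

lemma norm_fderiv_sub_le_grad2norm (hφ : ContDiff ℝ 2 φ)
    (hb : BddAbove (Set.range fun x => ‖fderiv ℝ (fderiv ℝ φ) x‖)) (x y : ℝ × ℝ) :
    ‖fderiv ℝ φ x - fderiv ℝ φ y‖ ≤ grad2norm φ * euclNorm (x - y) := by
  have grad2norm_nonneg : 0 ≤ grad2norm φ :=
    iSup_nonneg fun x => norm_nonneg (fderiv ℝ (fderiv ℝ φ) x)
  have differentiable : Differentiable ℝ (fderiv ℝ φ) :=
    (hφ.fderiv_right (m := 1) (by norm_num)).differentiable one_ne_zero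
  calc ‖fderiv ℝ φ x - fderiv ℝ φ y‖ ≤ grad2norm φ * ‖x - y‖ :=
        convex_univ.norm_image_sub_le_of_norm_fderiv_le (fun a _ => differentiable a)
          (fun a _ => le_ciSup hb a) (Set.mem_univ y) (Set.mem_univ x)
    _ ≤ grad2norm φ * euclNorm (x - y) := by gcongr; exact norm_le_euclNorm _

end TestFunction

theorem stmt_19_general :
    ∃ C > 0, ∀ ε : ℝ, 0 < ε → ∀ φ : ℝ × ℝ → ℝ, ContDiff ℝ 2 φ →
      BddAbove (Set.range fun x => ‖fderiv ℝ φ x‖) →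
      BddAbove (Set.range fun x => ‖fderiv ℝ (fderiv ℝ φ) x‖) →
      (Function.support φ ⊆ {x : ℝ × ℝ | ε < x.2}) →
      ∀ θ : ℝ, 0 < θ → ∀ α : ℝ, 0 < α →
      ∀ x y : ℝ × ℝ, 0 < x.2 → 0 < y.2 → θ < √((x.1 - y.1) ^ 2 + (x.2 - y.2) ^ 2) →
        |HphiK (BSKα α) φ x y - HphiK BSK φ x y|
          ≤ C * √α * (grad2norm φ / θ + grad1norm φ / ε ^ 2) := by
  refine ⟨5 / 4, by norm_num, fun ε hε φ hφ hb₁ hb₂ hsupp θ hθ α hα x y hx hy hxy => ?_⟩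
  rw [HphiK_sub]
  exact abs_HphiK_le_of_norm_le_div_sq (by positivity)
    (fun z hz => norm_BSKα_sub_BSK_le hα hz) hε hsupp (le_ciSup hb₁)
    (norm_fderiv_sub_le_grad2norm hφ hb₂) hθ hx.le hy.le (euclNorm_eq_sqrt (x - y) ▸ hxy.le)

/-- `H^α_φ → H_φ` uniformly on `{|x-y| > θ}` as `α → 0`, with
the explicit rate `C√α (‖∇²φ‖_∞/θ + ‖∇φ‖_∞/ε²)`. -/
theorem stmt_19 :
    ∃ C > 0, ∀ (ε : ℝ), 0 < ε → ∀ φ : ℝ × ℝ → ℝ,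
      ContDiff ℝ (⊤ : ℕ∞) φ → HasCompactSupport φ →
      (Function.support φ ⊆ {x : ℝ × ℝ | ε < x.2}) →
      ∀ θ : ℝ, 0 < θ → ∀ α : ℝ, 0 < α →
      ∀ x y : ℝ × ℝ, 0 < x.2 → 0 < y.2 → θ < Real.sqrt ((x.1 - y.1) ^ 2 + (x.2 - y.2) ^ 2) →
        |HphiK (BSKα α) φ x y - HphiK BSK φ x y|
          ≤ C * Real.sqrt α * (grad2norm φ / θ + grad1norm φ / ε ^ 2) := by
  obtain ⟨C, hC, rate⟩ := stmt_19_general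
  exact ⟨C, hC, fun ε hε φ hφ hc => rate ε hε φ (hφ.of_le (by norm_cast))
    (bddAbove_range_norm_fderiv (hφ.of_le (by norm_cast)) hc)
    (bddAbove_range_norm_fderiv (hφ.fderiv_right (by norm_cast)) (hc.fderiv ℝ))⟩
end
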